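/- arXiv:1601.07276 — 8 statements merged into one kernel-verified Lean document; each statement's English description precedes it below -/
import Mathlib

section
/- Let X be a complete metric space, Y a separable metric space, and T_n : X → Y (n ≥ 0) continuous maps. Let 𝒜 = ⋃_{δ∈D} ⋂_{μ∈M} 𝒜_{δ,μ} be an upper Furstenberg family. Suppose that for any nonempty open subset V of Y there is some δ ∈ D such that for any nonempty open subset U of X there is some x ∈ U with {n ≥ 0 : T_n x ∈ V} ∈ 𝒜_δ (where 𝒜_δ = ⋂_{μ∈M} 𝒜_{δ,μ}). Then the set of 𝒜-universal points for (T_n) is residual in X (in particular, (T_n) admits an 𝒜-universal point). -/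
open Filter Topology
open scoped Classical

/-- Hereditary upward family of subsets of ℕ. -/
def HeredUp (𝒜 : Set (Set ℕ)) : Prop := ∀ A ∈ 𝒜, ∀ B : Set ℕ, A ⊆ B → B ∈ 𝒜

/-- Finitely hereditary upward family: for every member `A` there is a finite set `F`
such that every `B ⊇ A ∩ F` belongs to the family. -/
def FinHeredUp (ℬ : Set (Set ℕ)) : Prop :=
  ∀ A ∈ ℬ, ∃ F : Finset ℕ, ∀ B : Set ℕ, A ∩ ↑F ⊆ B → B ∈ ℬ

/-- `𝒜` is an upper Furstenberg family with representation
`𝒜 = ⋃ δ ⋂ μ Adm δ μ` (where `M` is countable): a proper Furstenberg family,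
each `Adm δ μ` is finitely hereditary upward, and `𝒜` is uniformly left-invariant
(note `A - n = {k | k + n ∈ A}`). -/
structure IsUpperFurstenberg {D M : Type*} (𝒜 : Set (Set ℕ))
    (Adm : D → M → Set (Set ℕ)) : Prop where
  nonempty : 𝒜.Nonempty
  heredUp : HeredUp 𝒜
  proper : ∅ ∉ 𝒜
  countable : Countable M
  repr : 𝒜 = ⋃ δ : D, ⋂ μ : M, Adm δ μ
  finHered : ∀ δ μ, FinHeredUp (Adm δ μ)
  leftInv : ∀ A ∈ 𝒜, ∃ δ : D, ∀ n : ℕ, {k : ℕ | k + n ∈ A} ∈ ⋂ μ : M, Adm δ μ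

/-- A point `x` is `𝒜`-universal for the sequence of maps `T n`. -/
def AUniv {X Y : Type*} [TopologicalSpace X] [TopologicalSpace Y]
    (𝒜 : Set (Set ℕ)) (T : ℕ → X → Y) (x : X) : Prop :=
  ∀ V : Set Y, IsOpen V → V.Nonempty → {n : ℕ | T n x ∈ V} ∈ 𝒜

/-- Birkhoff-type theorem for upper Furstenberg families (Theorem 3.1, (a) ⇒ (c), (d)):
if for every nonempty open `V ⊆ Y` there is `δ ∈ D` such that every nonempty open `U ⊆ X`
contains a point `x` with `{n | T n x ∈ V} ∈ 𝒜_δ = ⋂ μ, Adm δ μ`, then the set of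
`𝒜`-universal points for `(T n)` is residual in `X` (in particular, if `X` is nonempty,
`(T n)` admits an `𝒜`-universal point). -/
theorem upperFurstenberg_birkhoff {X Y : Type*} [MetricSpace X] [CompleteSpace X]
    [MetricSpace Y] [TopologicalSpace.SeparableSpace Y]
    (T : ℕ → X → Y) (hT : ∀ n, Continuous (T n))
    {D M : Type*} (𝒜 : Set (Set ℕ)) (Adm : D → M → Set (Set ℕ))
    (hA : IsUpperFurstenberg 𝒜 Adm)
    (hyp : ∀ V : Set Y, IsOpen V → V.Nonempty → ∃ δ : D,
      ∀ U : Set X, IsOpen U → U.Nonempty → ∃ x ∈ U,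
        {n : ℕ | T n x ∈ V} ∈ ⋂ μ : M, Adm δ μ) :
    {x : X | AUniv 𝒜 T x} ∈ residual X ∧ (Nonempty X → ∃ x, AUniv 𝒜 T x) := by
  have hM := hA.countable
  have : SecondCountableTopology Y := UniformSpace.secondCountable_of_separable Y
  have key : {x : X | AUniv 𝒜 T x} ∈ residual X := by
    have hD : Nonempty D := ⟨(hA.leftInv _ hA.nonempty.some_mem).choose⟩
    choose! δ hδ using hyp
    have h1 : ∀ V ∈ TopologicalSpace.countableBasis Y, ∀ μ : M,
        ∀ᶠ x in residual X, {n : ℕ | T n x ∈ V} ∈ Adm (δ V) μ := by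
      intro V hV μ
      have hVo := TopologicalSpace.isOpen_of_mem_countableBasis hV
      have hVn := TopologicalSpace.nonempty_of_mem_countableBasis hV
      refine residual_of_dense_open ?_ ?_
      · rw [isOpen_iff_mem_nhds]
        intro x hx
        obtain ⟨F, hF⟩ := hA.finHered _ μ _ hx
        have h2 : ∀ᶠ y in 𝓝 x, ∀ n ∈ F, T n x ∈ V → T n y ∈ V := by
          rw [Filter.eventually_all_finset]
          intro n _
          by_cases h : T n x ∈ V
          · filter_upwards [(hT n).continuousAt.eventually (hVo.mem_nhds h)] with y hy _
            exact hy
          · exact Eventually.of_forall fun y h' => absurd h' h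
        filter_upwards [h2] with y hy
        exact hF _ fun n hn => hy n hn.2 hn.1
      · rw [dense_iff_inter_open]
        intro U hU hUn
        obtain ⟨x, hxU, hx⟩ := hδ V hVo hVn U hU hUn
        exact ⟨x, hxU, Set.mem_iInter.1 hx μ⟩
    have h2 := (eventually_countable_ball (TopologicalSpace.countable_countableBasis Y)).2
      fun V hV => eventually_countable_forall.2 (h1 V hV)
    filter_upwards [h2] with x hx W hW hWn
    obtain ⟨y, hy⟩ := hWn
    obtain ⟨V, hV, -, hVW⟩ :=
      (TopologicalSpace.isBasis_countableBasis Y).exists_subset_of_mem_open hy hW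
    refine hA.heredUp {n | T n x ∈ V} ?_ _ fun n hn => hVW hn
    rw [hA.repr]
    exact Set.mem_iUnion.2 ⟨_, Set.mem_iInter.2 (hx V hV)⟩
  refine ⟨key, fun _ => ?_⟩
  exact (dense_of_mem_residual key).nonempty
end

section
/- Let T : X → X be a continuous map on a separable complete metric space X, and let 𝒜 be an upper Furstenberg family that admits a representation 𝒜 = ⋂_{μ∈M} 𝒜_μ whose index set D is a singleton (i.e., 𝒜 itself is a countable intersection of finitely hereditary upward families and 𝒜 is uniformly left-invariant). Then the set of 𝒜-hypercyclic points for T is either empty or a dense G_δ set. -/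
open Filter Topology
open scoped Classical

/-- If the upper Furstenberg family `𝒜` has a representation with a singleton index set `D`
(i.e. `𝒜 = ⋂ μ, Adm μ`), then the set of `𝒜`-hypercyclic points of a continuous map on a
separable complete metric space is either empty or a dense `G_δ` set. -/
theorem AHC_empty_or_denseGdelta {X : Type*} [MetricSpace X] [CompleteSpace X]
    [TopologicalSpace.SeparableSpace X]
    (T : X → X) (hT : Continuous T)
    {M : Type*} (𝒜 : Set (Set ℕ)) (Adm : M → Set (Set ℕ))
    (hA : IsUpperFurstenberg 𝒜 (fun _ : PUnit => Adm)) :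
    {x : X | AUniv 𝒜 (fun n => T^[n]) x} = ∅ ∨
      (IsGδ {x : X | AUniv 𝒜 (fun n => T^[n]) x} ∧
        Dense {x : X | AUniv 𝒜 (fun n => T^[n]) x}) := by
  have mem𝒜 : ∀ A : Set ℕ, A ∈ 𝒜 ↔ ∀ μ, A ∈ Adm μ := by
    intro A
    rw [hA.repr]
    simp
  have hcont : ∀ n : ℕ, Continuous (T^[n]) := fun n => hT.iterate n
  have hopen : ∀ (μ : M) (V : Set X), IsOpen V →
      IsOpen {x : X | {n : ℕ | T^[n] x ∈ V} ∈ Adm μ} := by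
    intro μ V hV
    rw [isOpen_iff_mem_nhds]
    intro x hx
    obtain ⟨F, hF⟩ := hA.finHered PUnit.unit μ _ hx
    have h1 : ∀ n ∈ F, ∀ᶠ y in 𝓝 x, T^[n] x ∈ V → T^[n] y ∈ V := by
      intro n _
      by_cases h : T^[n] x ∈ V
      · filter_upwards [(hcont n).continuousAt.preimage_mem_nhds (hV.mem_nhds h)] with y hy _
        exact hy
      · exact Eventually.of_forall fun y h' => absurd h' h
    have h2 := (Filter.eventually_all_finset F).2 h1
    filter_upwards [h2] with y hy
    apply hF
    rintro n ⟨hn, hnF⟩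
    exact hy n hnF hn
  by_cases hne : {x : X | AUniv 𝒜 (fun n => T^[n]) x} = ∅
  · exact Or.inl hne
  right
  obtain ⟨x₀, hx₀⟩ := Set.nonempty_iff_ne_empty.2 hne
  constructor
  · haveI : SecondCountableTopology X := UniformSpace.secondCountable_of_separable X
    haveI := hA.countable
    have heq : {x : X | AUniv 𝒜 (fun n => T^[n]) x} =
        ⋂ V ∈ TopologicalSpace.countableBasis X, ⋂ μ : M,
          {x : X | {n : ℕ | T^[n] x ∈ V} ∈ Adm μ} := by
      ext x
      simp only [Set.mem_iInter, Set.mem_setOf_eq]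
      constructor
      · intro h V hV μ
        exact (mem𝒜 _).1 (h V (TopologicalSpace.isOpen_of_mem_countableBasis hV)
          (TopologicalSpace.nonempty_of_mem_countableBasis hV)) μ
      · rintro h V hV ⟨y, hy⟩
        obtain ⟨W, hW, _, hWV⟩ :=
          (TopologicalSpace.isBasis_countableBasis X).exists_subset_of_mem_open hy hV
        exact hA.heredUp _ ((mem𝒜 _).2 (h W hW)) _ fun n hn => hWV hn
    rw [heq]
    refine IsGδ.biInter (TopologicalSpace.countable_countableBasis X) fun V hV => ?_
    exact IsGδ.iInter fun μ =>
      (hopen μ V (TopologicalSpace.isOpen_of_mem_countableBasis hV)).isGδ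
  · rw [dense_iff_inter_open]
    intro U hU hUne
    have hmem := hx₀ U hU hUne
    have hNe : {n : ℕ | T^[n] x₀ ∈ U}.Nonempty := by
      rw [Set.nonempty_iff_ne_empty]
      intro h
      exact hA.proper (h ▸ hmem)
    obtain ⟨n, hn⟩ := hNe
    refine ⟨T^[n] x₀, hn, ?_⟩
    intro V hV hVne
    obtain ⟨δ, hδ⟩ := hA.leftInv _ (hx₀ V hV hVne)
    have h3 := hδ n
    rw [mem𝒜]
    intro μ
    have h4 := Set.mem_iInter.1 h3 μ
    simpa only [Set.mem_setOf_eq, Function.iterate_add_apply] using h4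
end

section
/- Let T be an invertible map (a homeomorphism) on a complete metric space X. If T is reiteratively hypercyclic then so is T^{-1}. -/
open Filter Topology
open scoped Classical

/-- Upper density of a set of natural numbers. -/
noncomputable def upperDensity (A : Set ℕ) : ℝ :=
  Filter.limsup
    (fun N : ℕ => (((Finset.range (N + 1)).filter (fun n => n ∈ A)).card : ℝ) / ((N : ℝ) + 1))
    Filter.atTop

/-- Lower density of a set of natural numbers. -/
noncomputable def lowerDensity (A : Set ℕ) : ℝ :=
  Filter.liminf
    (fun N : ℕ => (((Finset.range (N + 1)).filter (fun n => n ∈ A)).card : ℝ) / ((N : ℝ) + 1))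
    Filter.atTop

/-- Upper Banach density of a set of natural numbers. -/
noncomputable def upperBanachDensity (A : Set ℕ) : ℝ :=
  ⨅ N : ℕ, ⨆ m : ℕ, (((Finset.Icc m (m + N)).filter (fun n => n ∈ A)).card : ℝ) / ((N : ℝ) + 1)

theorem ubd_aux_exists (A : Set ℕ) (h : 0 < upperBanachDensity A) :
    ∃ c : ℝ, 0 < c ∧ ∀ N : ℕ, ∃ m : ℕ,
      c * ((N : ℝ) + 1) ≤ (((Finset.Icc m (m + N)).filter (fun n => n ∈ A)).card : ℝ) := by
  refine ⟨upperBanachDensity A / 2, by linarith, fun N => ?_⟩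
  have hb : BddBelow (Set.range (fun N : ℕ => ⨆ m : ℕ,
      (((Finset.Icc m (m + N)).filter (fun n => n ∈ A)).card : ℝ) / ((N : ℝ) + 1))) := by
    refine ⟨0, ?_⟩
    rintro _ ⟨N, rfl⟩
    exact Real.iSup_nonneg fun m => by positivity
  have h1 : upperBanachDensity A ≤ ⨆ m : ℕ,
      (((Finset.Icc m (m + N)).filter (fun n => n ∈ A)).card : ℝ) / ((N : ℝ) + 1) :=
    ciInf_le hb N
  have h2 : upperBanachDensity A / 2 < ⨆ m : ℕ,
      (((Finset.Icc m (m + N)).filter (fun n => n ∈ A)).card : ℝ) / ((N : ℝ) + 1) := by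
    linarith
  obtain ⟨m, hm⟩ := exists_lt_of_lt_ciSup h2
  refine ⟨m, ?_⟩
  have hN : (0 : ℝ) < (N : ℝ) + 1 := by positivity
  exact ((lt_div_iff₀ hN).1 hm).le

theorem ubd_aux_pos (A : Set ℕ) (c : ℝ) (hc : 0 < c)
    (h : ∀ N : ℕ, ∃ m : ℕ, ∃ S ⊆ Finset.Icc m (m + N),
      c * ((N : ℝ) + 1) ≤ (S.card : ℝ) ∧ ∀ n ∈ S, n ∈ A) :
    0 < upperBanachDensity A := by
  refine lt_of_lt_of_le hc (le_ciInf fun N => ?_)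
  have hN : (0 : ℝ) < (N : ℝ) + 1 := by positivity
  obtain ⟨m, S, hS, hcard, hA⟩ := h N
  have hb : BddAbove (Set.range (fun m : ℕ =>
      (((Finset.Icc m (m + N)).filter (fun n => n ∈ A)).card : ℝ) / ((N : ℝ) + 1))) := by
    refine ⟨1, ?_⟩
    rintro _ ⟨m, rfl⟩
    refine (div_le_one hN).2 ?_
    have : ((Finset.Icc m (m + N)).filter (fun n => n ∈ A)).card ≤ N + 1 := by
      refine (Finset.card_filter_le _ _).trans ?_
      rw [Nat.card_Icc]; omega
    exact_mod_cast this
  refine le_trans ?_ (le_ciSup hb m)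
  refine (le_div_iff₀ hN).2 (hcard.trans ?_)
  have : S.card ≤ ((Finset.Icc m (m + N)).filter (fun n => n ∈ A)).card :=
    Finset.card_le_card fun n hn => Finset.mem_filter.2 ⟨hS hn, hA n hn⟩
  exact_mod_cast this

theorem ubd_aux_unbounded (A : Set ℕ) (h : 0 < upperBanachDensity A) (K : ℕ) :
    ∃ n ∈ A, K ≤ n := by
  by_contra! hK
  obtain ⟨c, hc, hN⟩ := ubd_aux_exists A h
  obtain ⟨N, hN'⟩ := exists_nat_gt ((K : ℝ) / c)
  obtain ⟨m, hm⟩ := hN N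
  have h1 : ((Finset.Icc m (m + N)).filter (fun n => n ∈ A)).card ≤ K := by
    calc _ ≤ (Finset.range K).card := Finset.card_le_card fun n hn =>
            Finset.mem_range.2 (hK n (Finset.mem_filter.1 hn).2)
      _ = K := Finset.card_range K
  have h2 : (((Finset.Icc m (m + N)).filter (fun n => n ∈ A)).card : ℝ) ≤ K := by
    exact_mod_cast h1
  have h3 := (div_lt_iff₀ hc).1 hN'
  nlinarith

theorem iterate_symm_aux {X : Type*} [TopologicalSpace X] (T : X ≃ₜ X) (x : X) {n M : ℕ}
    (h : n ≤ M) : (⇑T.symm)^[M - n] ((⇑T)^[M] x) = (⇑T)^[n] x := by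
  obtain ⟨k, rfl⟩ := Nat.exists_eq_add_of_le h
  rw [Nat.add_sub_cancel_left, Nat.add_comm, Function.iterate_add_apply]
  exact (Function.LeftInverse.iterate T.left_inv k) _

/-- The inverse of an invertible reiteratively hypercyclic map on a complete metric space
is reiteratively hypercyclic. -/
theorem reiterativelyHypercyclic_inverse {X : Type*} [MetricSpace X] [CompleteSpace X]
    (T : X ≃ₜ X)
    (h : ∃ x, ∀ U : Set X, IsOpen U → U.Nonempty →
      0 < upperBanachDensity {n : ℕ | (⇑T)^[n] x ∈ U}) :
    ∃ x, ∀ U : Set X, IsOpen U → U.Nonempty →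
      0 < upperBanachDensity {n : ℕ | (⇑T.symm)^[n] x ∈ U} := by
  obtain ⟨x, hx⟩ := h
  have : Nonempty X := ⟨x⟩
  have hd : DenseRange (fun n : ℕ => (⇑T)^[n] x) := by
    refine dense_iff_inter_open.2 fun U hU hne => ?_
    obtain ⟨n, hn, -⟩ := ubd_aux_unbounded _ (hx U hU hne) 0
    exact ⟨_, hn, n, rfl⟩
  have : TopologicalSpace.SeparableSpace X := ⟨_, Set.countable_range _, hd⟩
  have : SecondCountableTopology X := UniformSpace.secondCountable_of_separable X
  obtain ⟨B, hBc, hBe, hB⟩ := TopologicalSpace.exists_countable_basis X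
  have : Countable B := hBc.to_subtype
  have hBne : ∀ U : B, (U : Set X).Nonempty := fun U =>
    Set.nonempty_iff_ne_empty.2 fun h => hBe (h ▸ U.2)
  choose c hc hcN using fun U : B => ubd_aux_exists _ (hx U (hB.isOpen U.2) (hBne U))
  let G : B × ℕ → Set X := fun p => ⋃ m : ℕ, ⋃ S : Finset ℕ,
    ⋃ _ : S ⊆ Finset.Icc m (m + p.2) ∧ c p.1 * ((p.2 : ℝ) + 1) ≤ (S.card : ℝ),
      ⋂ n ∈ S, (⇑T.symm)^[n] ⁻¹' (p.1 : Set X)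
  have hGo : ∀ p, IsOpen (G p) := fun p =>
    isOpen_iUnion fun m => isOpen_iUnion fun S => isOpen_iUnion fun _ =>
      isOpen_biInter_finset fun n _ => (hB.isOpen p.1.2).preimage (T.symm.continuous.iterate n)
  have hGd : ∀ p, Dense (G p) := by
    rintro ⟨U, N⟩
    refine dense_iff_inter_open.2 fun V hV hne => ?_
    obtain ⟨m, hm⟩ := hcN U N
    obtain ⟨M, hMV, hM⟩ := ubd_aux_unbounded _ (hx V hV hne) (m + N)
    refine ⟨_, hMV, ?_⟩
    simp only [G, Set.mem_iUnion, Set.mem_iInter]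
    refine ⟨M - (m + N), Finset.image (fun n => M - n)
      ((Finset.Icc m (m + N)).filter (fun n => n ∈ {n : ℕ | (⇑T)^[n] x ∈ (U : Set X)})),
      ⟨?_, ?_⟩, ?_⟩
    · intro k hk
      obtain ⟨n, hn, rfl⟩ := Finset.mem_image.1 hk
      have := Finset.mem_Icc.1 (Finset.mem_filter.1 hn).1
      exact Finset.mem_Icc.2 (by omega)
    · rw [Finset.card_image_of_injOn]
      · exact hm
      · intro a ha b hb hab
        have h1 := Finset.mem_Icc.1 (Finset.mem_filter.1 (Finset.mem_coe.1 ha)).1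
        have h2 := Finset.mem_Icc.1 (Finset.mem_filter.1 (Finset.mem_coe.1 hb)).1
        simp only at hab
        omega
    · intro k hk
      obtain ⟨n, hn, rfl⟩ := Finset.mem_image.1 hk
      have h1 := Finset.mem_Icc.1 (Finset.mem_filter.1 hn).1
      have h2 := (Finset.mem_filter.1 hn).2
      rw [Set.mem_preimage, iterate_symm_aux T x (by omega)]
      exact h2
  obtain ⟨z, hz⟩ := (dense_iInter_of_isOpen hGo hGd).nonempty
  refine ⟨z, fun V hV hne => ?_⟩
  obtain ⟨y, hy⟩ := hne
  obtain ⟨U, hU, -, hUV⟩ := hB.exists_subset_of_mem_open hy hV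
  refine ubd_aux_pos _ (c ⟨U, hU⟩) (hc _) fun N => ?_
  have := Set.mem_iInter.1 hz (⟨U, hU⟩, N)
  simp only [G, Set.mem_iUnion, Set.mem_iInter] at this
  obtain ⟨m, S, ⟨hS, hcard⟩, hn⟩ := this
  exact ⟨m, S, hS, hcard, fun n hn' => hUV (hn n hn')⟩
end

section
/- Let T be an invertible map (a homeomorphism) on a complete metric space X. If T is frequently hypercyclic then T^{-1} is upper frequently hypercyclic. -/
open Filter Topology
open scoped Classical

lemma fhc_lower_pos {A : Set ℕ} (hA : 0 < lowerDensity A) :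
    ∃ δ : ℝ, 0 < δ ∧ ∀ᶠ N : ℕ in atTop,
      δ * ((N : ℝ) + 1) < (((Finset.range (N + 1)).filter (fun n => n ∈ A)).card : ℝ) := by
  refine ⟨lowerDensity A / 2, by linarith, ?_⟩
  have h1 : lowerDensity A / 2 < Filter.liminf
    (fun N : ℕ => (((Finset.range (N + 1)).filter (fun n => n ∈ A)).card : ℝ) / ((N : ℝ) + 1))
    Filter.atTop := by
    change lowerDensity A / 2 < lowerDensity A
    linarith
  have h2 := Filter.eventually_lt_of_lt_liminf h1
    (Filter.isBoundedUnder_of ⟨0, fun N => by simp only [ge_iff_le]; positivity⟩)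
  filter_upwards [h2] with N hN
  rwa [lt_div_iff₀ (by positivity)] at hN

lemma fhc_upper_pos {A : Set ℕ} {δ : ℝ} (hδ : 0 < δ)
    (hA : ∃ᶠ N : ℕ in atTop,
      δ * ((N : ℝ) + 1) < (((Finset.range (N + 1)).filter (fun n => n ∈ A)).card : ℝ)) :
    0 < upperDensity A := by
  refine lt_of_lt_of_le hδ ?_
  unfold upperDensity
  refine Filter.le_limsup_of_frequently_le (hA.mono fun N hN => ?_) ?_
  · rw [le_div_iff₀ (by positivity)]
    exact hN.le
  · refine Filter.isBoundedUnder_of ⟨1, fun N => ?_⟩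
    rw [div_le_one (by positivity)]
    have := Finset.card_filter_le (Finset.range (N + 1)) (fun n => n ∈ A)
    rw [Finset.card_range] at this
    exact_mod_cast this

lemma fhc_infinite {A : Set ℕ} (hA : 0 < lowerDensity A) (n : ℕ) : ∃ m ≥ n, m ∈ A := by
  by_contra! hc
  obtain ⟨δ, hδ, hN⟩ := fhc_lower_pos hA
  obtain ⟨M, hM⟩ := exists_nat_gt ((n : ℝ) / δ)
  obtain ⟨N, hN, hMN⟩ := (hN.and (eventually_ge_atTop M)).exists
  have hsub : (Finset.range (N + 1)).filter (fun k => k ∈ A) ⊆ Finset.range n := by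
    intro k hk
    rw [Finset.mem_filter] at hk
    rw [Finset.mem_range]
    by_contra hkn
    exact hc k (by omega) hk.2
  have hcard := Finset.card_le_card hsub
  rw [Finset.card_range] at hcard
  have h1 : (((Finset.range (N + 1)).filter (fun k => k ∈ A)).card : ℝ) ≤ n := by
    exact_mod_cast hcard
  rw [div_lt_iff₀ hδ] at hM
  have h2 : (M : ℝ) ≤ N := by exact_mod_cast hMN
  nlinarith

/-- If an invertible map on a complete metric space is frequently hypercyclic, then its
inverse is upper frequently hypercyclic. -/
theorem frequentlyHypercyclic_inverse_upperFrequent {X : Type*} [MetricSpace X]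
    [CompleteSpace X] (T : X ≃ₜ X)
    (h : ∃ x, ∀ U : Set X, IsOpen U → U.Nonempty →
      0 < lowerDensity {n : ℕ | (⇑T)^[n] x ∈ U}) :
    ∃ x, ∀ U : Set X, IsOpen U → U.Nonempty →
      0 < upperDensity {n : ℕ | (⇑T.symm)^[n] x ∈ U} := by
  obtain ⟨x, hx⟩ := h
  have : Nonempty X := ⟨x⟩
  have : TopologicalSpace.SeparableSpace X := by
    refine ⟨Set.range (fun n : ℕ => (⇑T)^[n] x), Set.countable_range _, ?_⟩
    rw [dense_iff_inter_open]
    intro U hU hne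
    obtain ⟨m, -, hm⟩ := fhc_infinite (hx U hU hne) 0
    exact ⟨_, hm, m, rfl⟩
  have : SecondCountableTopology X := UniformSpace.secondCountable_of_separable X
  let ι := TopologicalSpace.countableBasis X
  have hex : ∀ B : ι, ∃ δ : ℝ, 0 < δ ∧ ∀ᶠ N : ℕ in atTop,
      δ * ((N : ℝ) + 1) <
        (((Finset.range (N + 1)).filter (fun n => (⇑T)^[n] x ∈ (B : Set X))).card : ℝ) :=
    fun B => fhc_lower_pos (hx B (TopologicalSpace.isOpen_of_mem_countableBasis B.2)
      (TopologicalSpace.nonempty_of_mem_countableBasis B.2))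
  choose δ hδ hev using hex
  let G : ι × ℕ → Set X := fun p => {y | ∃ N ≥ p.2, δ p.1 * ((N : ℝ) + 1) <
    (((Finset.range (N + 1)).filter (fun n => (⇑T.symm)^[n] y ∈ (p.1 : Set X))).card : ℝ)}
  have hopen : ∀ p, IsOpen (G p) := by
    rintro ⟨B, n⟩
    rw [isOpen_iff_mem_nhds]
    rintro y ⟨N, hNn, hN⟩
    have hall : ∀ᶠ z in 𝓝 y,
        ∀ k ∈ (Finset.range (N + 1)).filter (fun n => (⇑T.symm)^[n] y ∈ (B : Set X)),
          (⇑T.symm)^[k] z ∈ (B : Set X) := by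
      rw [Filter.eventually_all_finset]
      intro k hk
      exact (T.symm.continuous.iterate k).continuousAt.eventually_mem
        ((TopologicalSpace.isOpen_of_mem_countableBasis B.2).mem_nhds (Finset.mem_filter.1 hk).2)
    filter_upwards [hall] with z hz
    refine ⟨N, hNn, hN.trans_le ?_⟩
    exact_mod_cast Finset.card_le_card fun k hk =>
      Finset.mem_filter.2 ⟨(Finset.mem_filter.1 hk).1, hz k hk⟩
  have hdense : ∀ p, Dense (G p) := by
    rintro ⟨B, n⟩
    rw [dense_iff_inter_open]
    intro V hV hVne
    obtain ⟨M, hM⟩ := eventually_atTop.1 (hev B)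
    obtain ⟨m, hm, hmV⟩ := fhc_infinite (hx V hV hVne) (max M n)
    refine ⟨(⇑T)^[m] x, hmV, m, (le_max_right _ _).trans hm,
      (hM m ((le_max_left _ _).trans hm)).trans_le ?_⟩
    have hcard : ((Finset.range (m + 1)).filter (fun n => (⇑T)^[n] x ∈ (B : Set X))).card ≤
        ((Finset.range (m + 1)).filter
          (fun n => (⇑T.symm)^[n] ((⇑T)^[m] x) ∈ (B : Set X))).card := by
      refine Finset.card_le_card_of_injOn (fun j => m - j) ?_ ?_
      · intro j hj
        have hj := Finset.mem_filter.1 hj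
        have hjm := Finset.mem_range.1 hj.1
        refine Finset.mem_filter.2 ⟨Finset.mem_range.2 (by dsimp only; omega), ?_⟩
        have hsplit : (⇑T)^[m] x = (⇑T)^[m - j] ((⇑T)^[j] x) := by
          rw [← Function.iterate_add_apply]
          congr 2
          omega
        rw [hsplit, Function.LeftInverse.iterate T.symm_apply_apply]
        exact hj.2
      · intro a ha b hb hab
        have ha := Finset.mem_range.1 (Finset.mem_filter.1 ha).1
        have hb := Finset.mem_range.1 (Finset.mem_filter.1 hb).1
        simp only at hab
        omega
    exact_mod_cast hcard
  have : Countable ι := (TopologicalSpace.countable_countableBasis X).to_subtype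
  obtain ⟨y, hy⟩ := (dense_iInter_of_isOpen hopen hdense).nonempty
  rw [Set.mem_iInter] at hy
  refine ⟨y, fun U hU ⟨u, hu⟩ => ?_⟩
  obtain ⟨B, hB, -, hBU⟩ :=
    (TopologicalSpace.isBasis_countableBasis X).exists_subset_of_mem_open hu hU
  refine fhc_upper_pos (hδ ⟨B, hB⟩) (frequently_atTop.2 fun n => ?_)
  obtain ⟨N, hNn, hN⟩ := hy (⟨B, hB⟩, n)
  refine ⟨N, hNn, hN.trans_le ?_⟩
  exact_mod_cast Finset.card_le_card fun k hk =>
    Finset.mem_filter.2 ⟨(Finset.mem_filter.1 hk).1, hBU (Finset.mem_filter.1 hk).2⟩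
end

section
/- Let w = (w_n)_{n≥1} be a bounded sequence of nonzero scalars and 𝒜 a uniformly finitely invariant upper Furstenberg family. Then the weighted backward shift B_w is 𝒜-hypercyclic on c₀ if and only if for any p ≥ 0 and M > 0 there exists some A ∈ 𝒜 with A ⊆ [p,∞) such that (i) |w_1 w_2 ⋯ w_n| → ∞ as n → ∞ along n ∈ A, and (ii) for any n, m ∈ A with n > m, |w_1 w_2 ⋯ w_{n−m+p}| > M. -/
open Filter Topology
open scoped Classical ZeroAtInfty

/-- The upper Furstenberg representation is uniformly finitely invariant (u.f.i.):
for every `A ∈ 𝒜` there is `δ ∈ D` with `A \ [0,n] ∈ 𝒜_δ` for all `n`. -/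
def UFI {D M : Type*} (𝒜 : Set (Set ℕ)) (Adm : D → M → Set (Set ℕ)) : Prop :=
  ∀ A ∈ 𝒜, ∃ δ : D, ∀ n : ℕ, (A \ Set.Iic n) ∈ ⋂ μ : M, Adm δ μ

namespace ShiftAux

variable {𝕜 : Type*} [RCLike 𝕜]

/-- The product `w₁ ⋯ w_n`. -/
noncomputable def W (w : ℕ → 𝕜) (n : ℕ) : 𝕜 := ∏ ν ∈ Finset.Icc 1 n, w ν

lemma W_succ (w : ℕ → 𝕜) (n : ℕ) : W w (n + 1) = W w n * w (n + 1) := by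
  unfold W
  rw [Finset.prod_Icc_succ_top (by omega)]

lemma W_ne (w : ℕ → 𝕜) (h : ∀ n, w n ≠ 0) (n : ℕ) : W w n ≠ 0 :=
  Finset.prod_ne_zero_iff.mpr fun i _ => h i

lemma W_add_le (w : ℕ → 𝕜) {C : ℝ} (hC : ∀ n, ‖w n‖ ≤ C) (a b : ℕ) :
    ‖W w (a + b)‖ ≤ ‖W w a‖ * C ^ b := by
  have hC0 : 0 ≤ C := (norm_nonneg _).trans (hC 0)
  induction b with
  | zero => simp
  | succ b ih =>
    rw [← add_assoc, W_succ, norm_mul, pow_succ, ← mul_assoc]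
    exact mul_le_mul ih (hC _) (norm_nonneg _) (by positivity)

lemma iter_apply (w : ℕ → 𝕜) (Bw : C₀(ℕ, 𝕜) →L[𝕜] C₀(ℕ, 𝕜))
    (hBw : ∀ (x : C₀(ℕ, 𝕜)) (n : ℕ), Bw x n = w (n + 1) * x (n + 1))
    (n : ℕ) (x : C₀(ℕ, 𝕜)) (j : ℕ) :
    W w j * ((⇑Bw)^[n] x) j = W w (n + j) * x (n + j) := by
  induction n generalizing j with
  | zero => simp
  | succ n ih =>
    rw [Function.iterate_succ_apply', hBw, ← mul_assoc, ← W_succ, ih (j + 1)]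
    congr 2 <;> ring_nf

/-- Build an element of `c₀`. -/
noncomputable def mkC (f : ℕ → 𝕜) (hf : Tendsto f atTop (𝓝 0)) : C₀(ℕ, 𝕜) where
  toFun := f
  continuous_toFun := continuous_of_discreteTopology
  zero_at_infty' := by
    rw [Filter.cocompact_eq_cofinite, Nat.cofinite_eq_atTop]; exact hf

@[simp] lemma mkC_apply (f : ℕ → 𝕜) (hf : Tendsto f atTop (𝓝 0)) (n : ℕ) : mkC f hf n = f n := rfl

lemma tendsto_C (x : C₀(ℕ, 𝕜)) : Tendsto (fun n => x n) atTop (𝓝 0) := by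
  have := x.zero_at_infty'
  rw [Filter.cocompact_eq_cofinite, Nat.cofinite_eq_atTop] at this; exact this

lemma le_dist (x y : C₀(ℕ, 𝕜)) (n : ℕ) : ‖x n - y n‖ ≤ dist x y := by
  rw [← ZeroAtInftyContinuousMap.dist_toBCF_eq_dist, ← dist_eq_norm]
  exact BoundedContinuousFunction.dist_coe_le_dist (f := x.toBCF) (g := y.toBCF) n

lemma dist_le_of (x y : C₀(ℕ, 𝕜)) {c : ℝ} (hc : 0 ≤ c) (h : ∀ n, ‖x n - y n‖ ≤ c) :
    dist x y ≤ c := by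
  rw [← ZeroAtInftyContinuousMap.dist_toBCF_eq_dist]
  refine (BoundedContinuousFunction.dist_le hc).mpr fun n => ?_
  rw [dist_eq_norm]; exact h n

lemma fin_tendsto (f : ℕ → 𝕜) (q : ℕ) (h : ∀ i, q < i → f i = 0) : Tendsto f atTop (𝓝 0) := by
  refine tendsto_const_nhds.congr' ?_
  filter_upwards [eventually_gt_atTop q] with i hi using (h i hi).symm

/-- unit vectors -/
noncomputable def e (𝕜 : Type*) [RCLike 𝕜] (k : ℕ) : C₀(ℕ, 𝕜) :=
  mkC (fun i => if i = k then 1 else 0) (fin_tendsto _ k fun i hi => by simp [hi.ne'])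

lemma sep : TopologicalSpace.SeparableSpace C₀(ℕ, 𝕜) := by
  have h1 : TopologicalSpace.IsSeparable (Submodule.span 𝕜 (Set.range (e 𝕜)) : Set C₀(ℕ, 𝕜)) :=
    (Set.countable_range _).isSeparable.span
  rw [← TopologicalSpace.isSeparable_univ_iff]
  refine h1.closure.mono ?_
  intro v _
  rw [Metric.mem_closure_iff]
  intro ε hε
  have hv := (Metric.tendsto_atTop.mp (tendsto_C v)) (ε / 2) (by positivity)
  obtain ⟨N, hN⟩ := hv
  refine ⟨∑ k ∈ Finset.range N, v k • e 𝕜 k, ?_, ?_⟩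
  · exact Submodule.sum_mem _ fun k _ => Submodule.smul_mem _ _ (Submodule.subset_span ⟨k, rfl⟩)
  · refine (dist_le_of _ _ (c := ε / 2) (by positivity) fun n => ?_).trans_lt (by linarith)
    have : (∑ k ∈ Finset.range N, v k • e 𝕜 k) n = if n < N then v n else 0 := by
      have h2 : ∀ s : Finset ℕ, (∑ k ∈ s, v k • e 𝕜 k) n = ∑ k ∈ s, v k * (if n = k then 1 else 0) := by
        intro s
        induction s using Finset.induction_on with
        | empty => simp
        | insert a s ha ih =>
          rw [Finset.sum_insert ha, Finset.sum_insert ha, ZeroAtInftyContinuousMap.add_apply, ih]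
          rfl
      rw [h2]
      simp
    rw [this]
    split_ifs with h
    · simp; positivity
    · simpa using (hN n (by omega)).le

/-- Baire category criterion. -/
lemma baire {X : Type*} [MetricSpace X] [CompleteSpace X] [SecondCountableTopology X]
    (T : X → X) (hT : Continuous T)
    {D M : Type*} (𝒜 : Set (Set ℕ)) (Adm : D → M → Set (Set ℕ))
    (hA : IsUpperFurstenberg 𝒜 Adm) [Nonempty X]
    (h : ∀ V : Set X, IsOpen V → V.Nonempty → ∃ δ : D, ∀ U : Set X, IsOpen U → U.Nonempty →
      ∃ x ∈ U, {n : ℕ | T^[n] x ∈ V} ∈ ⋂ μ, Adm δ μ) :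
    ∃ x, AUniv 𝒜 (fun n => T^[n]) x := by
  have := hA.countable
  have hb := TopologicalSpace.isBasis_countableBasis X
  have hcb := TopologicalSpace.countable_countableBasis X
  have : Countable (TopologicalSpace.countableBasis X) := hcb.to_subtype
  have hbasis : ∀ V : TopologicalSpace.countableBasis X, ∃ δ : D, ∀ U : Set X, IsOpen U → U.Nonempty →
      ∃ x ∈ U, {n : ℕ | T^[n] x ∈ V.1} ∈ ⋂ μ, Adm δ μ := fun V =>
    h V.1 (hb.isOpen V.2) (TopologicalSpace.nonempty_of_mem_countableBasis V.2)
  choose δ hδ using hbasis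
  have hd : Dense (⋂ i : TopologicalSpace.countableBasis X × M,
      {x | {n : ℕ | T^[n] x ∈ i.1.1} ∈ Adm (δ i.1) i.2}) := by
    apply dense_iInter_of_isOpen
    · rintro ⟨V, μ⟩
      rw [isOpen_iff_mem_nhds]
      intro x hx
      obtain ⟨F, hF⟩ := hA.finHered (δ V) μ _ hx
      have : ∀ᶠ y in 𝓝 x, ∀ n ∈ F, T^[n] x ∈ V.1 → T^[n] y ∈ V.1 := by
        rw [Filter.eventually_all_finset]
        intro n _
        by_cases hn : T^[n] x ∈ V.1
        · filter_upwards [(hT.iterate n).continuousAt.preimage_mem_nhds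
            ((hb.isOpen V.2).mem_nhds hn)] with y hy _ using hy
        · filter_upwards with y hy using absurd hy hn
      filter_upwards [this] with y hy
      exact hF _ fun n hn => hy n hn.2 hn.1
    · rintro ⟨V, μ⟩
      rw [dense_iff_inter_open]
      intro U hU hUn
      obtain ⟨x, hx, hx2⟩ := hδ V U hU hUn
      exact ⟨x, hx, Set.mem_iInter.mp hx2 μ⟩
  obtain ⟨x, hx⟩ := hd.nonempty
  refine ⟨x, fun V hV hVn => ?_⟩
  obtain ⟨v, hv⟩ := hVn
  obtain ⟨Vb, hVb, -, hsub⟩ := hb.exists_subset_of_mem_open hv hV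
  refine hA.heredUp {n : ℕ | T^[n] x ∈ Vb} ?_ _ fun n hn => hsub hn
  rw [hA.repr]
  refine Set.mem_iUnion.mpr ⟨δ ⟨Vb, hVb⟩, Set.mem_iInter.mpr fun μ => ?_⟩
  exact Set.mem_iInter.mp hx (⟨Vb, hVb⟩, μ)

lemma forward (w : ℕ → 𝕜) (hw0 : ∀ n, w n ≠ 0)
    (Bw : C₀(ℕ, 𝕜) →L[𝕜] C₀(ℕ, 𝕜))
    (hBw : ∀ (x : C₀(ℕ, 𝕜)) (n : ℕ), Bw x n = w (n + 1) * x (n + 1))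
    {D M : Type*} (𝒜 : Set (Set ℕ)) (Adm : D → M → Set (Set ℕ))
    (hA : IsUpperFurstenberg 𝒜 Adm) (hufi : UFI 𝒜 Adm)
    (x : C₀(ℕ, 𝕜)) (hx : AUniv 𝒜 (fun n => (⇑Bw)^[n]) x) (p : ℕ) (Mc : ℝ) (hM : 0 < Mc) :
    ∃ A ∈ 𝒜, (∀ n ∈ A, p ≤ n) ∧
        Filter.Tendsto (fun n : ℕ => ‖W w n‖)
          (Filter.atTop ⊓ Filter.principal A) Filter.atTop ∧
        (∀ n ∈ A, ∀ m ∈ A, m < n → Mc < ‖W w (n - m + p)‖) := by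
  have hWp : 0 < ‖W w p‖ := norm_pos_iff.mpr (W_ne w hw0 p)
  set α : ℝ := 1 + (1 + Mc / ‖W w p‖) with hα
  have hα0 : 0 ≤ α := by positivity
  let f : C₀(ℕ, 𝕜) := mkC (fun i => if i ≤ p then (α : 𝕜) else 0)
    (fin_tendsto _ p fun i hi => by simp [hi])
  have h1 := hx (Metric.ball f 1) Metric.isOpen_ball ⟨f, by simp⟩
  set N := {n : ℕ | (⇑Bw)^[n] x ∈ Metric.ball f 1} with hN
  obtain ⟨δ, hδ⟩ := hufi N h1
  have hlow : ∀ n ∈ N, ∀ j ≤ p, 1 + Mc / ‖W w p‖ < ‖((⇑Bw)^[n] x) j‖ := by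
    intro n hn j hj
    have h2 : ‖((⇑Bw)^[n] x) j - f j‖ < 1 := (le_dist _ _ j).trans_lt hn
    have h3 : f j = (α : 𝕜) := by simp [f, hj]
    have h4 : ‖f j‖ = α := by rw [h3, RCLike.norm_ofReal, abs_of_nonneg hα0]
    have h5 := norm_sub_norm_le (f j) (((⇑Bw)^[n] x) j)
    rw [norm_sub_rev] at h5
    linarith
  have hup : ∀ n ∈ N, ∀ j, p < j → ‖((⇑Bw)^[n] x) j‖ < 1 := by
    intro n hn j hj
    have h2 : ‖((⇑Bw)^[n] x) j - f j‖ < 1 := (le_dist _ _ j).trans_lt hn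
    have h3 : f j = 0 := by simp [f, hj]
    simpa [h3] using h2
  refine ⟨N \ Set.Iic p, ?_, ?_, ?_, ?_⟩
  · rw [hA.repr]; exact Set.mem_iUnion.mpr ⟨δ, hδ p⟩
  · rintro n ⟨_, hn⟩
    simp at hn; omega
  · have hxi : Tendsto (fun n => ‖x n‖) atTop (𝓝 0) := by simpa using (tendsto_C x).norm
    rw [tendsto_atTop]
    intro b
    rw [eventually_inf_principal]
    have hev : ∀ᶠ n in atTop, ‖x n‖ < 1 / (|b| + 1) := hxi.eventually_lt_const (by positivity)
    filter_upwards [hev] with n hn hnA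
    have h2 := iter_apply w Bw hBw n x 0
    have h3 := hlow n hnA.1 0 (Nat.zero_le _)
    have h4 : 1 < ‖W w n‖ * ‖x n‖ := by
      have : W w 0 = 1 := by simp [W]
      rw [this, one_mul, add_zero] at h2
      rw [← norm_mul, ← h2]
      have : 0 < Mc / ‖W w p‖ := by positivity
      linarith
    have hb1 : 0 < |b| + 1 := by positivity
    rw [lt_div_iff₀ hb1] at hn
    by_contra hcon
    push Not at hcon
    have : ‖W w n‖ ≤ |b| + 1 := by linarith [le_abs_self b]
    nlinarith [norm_nonneg (x n)]
  · rintro n ⟨hn, -⟩ m ⟨hm, -⟩ hmn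
    have h2 := iter_apply w Bw hBw n x p
    have h3 := iter_apply w Bw hBw m x (n - m + p)
    rw [show m + (n - m + p) = n + p by omega, ← h2] at h3
    have h4 := hlow n hn p le_rfl
    have h5 := hup m hm (n - m + p) (by omega)
    have h6 := congrArg norm h3
    rw [norm_mul, norm_mul] at h6
    have h7 : Mc < ‖W w p‖ * ‖((⇑Bw)^[n] x) p‖ := by
      have : ‖W w p‖ * (1 + Mc / ‖W w p‖) = ‖W w p‖ + Mc := by field_simp
      nlinarith
    nlinarith [norm_nonneg (W w (n - m + p))]

lemma backward (w : ℕ → 𝕜) (hw0 : ∀ n, w n ≠ 0) (hwb : ∃ C : ℝ, ∀ n, ‖w n‖ ≤ C)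
    (Bw : C₀(ℕ, 𝕜) →L[𝕜] C₀(ℕ, 𝕜))
    (hBw : ∀ (x : C₀(ℕ, 𝕜)) (n : ℕ), Bw x n = w (n + 1) * x (n + 1))
    {D M : Type*} (𝒜 : Set (Set ℕ)) (Adm : D → M → Set (Set ℕ))
    (hA : IsUpperFurstenberg 𝒜 Adm) (hufi : UFI 𝒜 Adm)
    (H : ∀ p : ℕ, ∀ Mc : ℝ, 0 < Mc → ∃ A ∈ 𝒜, (∀ n ∈ A, p ≤ n) ∧
        Filter.Tendsto (fun n : ℕ => ‖W w n‖)
          (Filter.atTop ⊓ Filter.principal A) Filter.atTop ∧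
        (∀ n ∈ A, ∀ m ∈ A, m < n → Mc < ‖W w (n - m + p)‖)) :
    ∃ x, AUniv 𝒜 (fun n => (⇑Bw)^[n]) x := by
  have := sep (𝕜 := 𝕜)
  have : SecondCountableTopology C₀(ℕ, 𝕜) := UniformSpace.secondCountable_of_separable _
  refine baire _ Bw.continuous 𝒜 Adm hA ?_
  intro V hV ⟨v, hv⟩
  obtain ⟨ε, hε, hεV⟩ := Metric.isOpen_iff.mp hV v hv
  obtain ⟨C, hC1, hC⟩ : ∃ C : ℝ, 1 ≤ C ∧ ∀ n, ‖w n‖ ≤ C := by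
    obtain ⟨C, hC⟩ := hwb
    exact ⟨max C 1, le_max_right _ _, fun n => (hC n).trans (le_max_left _ _)⟩
  have hWpos : ∀ n, 0 < ‖W w n‖ := fun n => norm_pos_iff.mpr (W_ne w hw0 n)
  obtain ⟨p, hp⟩ := (Metric.tendsto_atTop.mp (tendsto_C v)) (ε / 3) (by positivity)
  set a : ℕ → 𝕜 := fun k => W w k * v k with ha
  set R : ℝ := ∑ k ∈ Finset.range (p + 1), ‖a k‖ with hR
  have hR0 : 0 ≤ R := Finset.sum_nonneg fun _ _ => norm_nonneg _
  set Mc : ℝ := R * C ^ p * (3 / ε) + 1 + ∑ j ∈ Finset.range (2 * p + 1), ‖W w j‖ with hMc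
  have hsum0 : 0 ≤ ∑ j ∈ Finset.range (2 * p + 1), ‖W w j‖ :=
    Finset.sum_nonneg fun _ _ => norm_nonneg _
  have hprod0 : 0 ≤ R * C ^ p * (3 / ε) := by positivity
  have hMpos : 0 < Mc := by linarith
  obtain ⟨A, hAA, hAp, hAt, hAM⟩ := H p Mc hMpos
  set Ashift : Set ℕ := {k | k + p ∈ A} with hAshift
  have hAshiftMem : Ashift ∈ 𝒜 := by
    obtain ⟨δ, hδ⟩ := hA.leftInv A hAA
    rw [hA.repr]; exact Set.mem_iUnion.mpr ⟨δ, hδ p⟩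
  obtain ⟨δ, hδ⟩ := hufi Ashift hAshiftMem
  have hMshift : ∀ n ∈ Ashift, ∀ m ∈ Ashift, m < n → Mc < ‖W w (n - m + p)‖ := by
    intro n hn m hm hmn
    have := hAM (n + p) hn (m + p) hm (by omega)
    rwa [show n + p - (m + p) + p = n - m + p by omega] at this
  have hsep : ∀ n ∈ Ashift, ∀ m ∈ Ashift, m < n → p < n - m := by
    intro n hn m hm hmn
    by_contra hcon
    have h1 := hMshift n hn m hm hmn
    have h2 : ‖W w (n - m + p)‖ ≤ ∑ j ∈ Finset.range (2 * p + 1), ‖W w j‖ :=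
      Finset.single_le_sum (f := fun j => ‖W w j‖) (fun _ _ => norm_nonneg _)
        (Finset.mem_range.mpr (by omega))
    linarith
  have hCb : ∀ i k, k ≤ p → ‖W w (i + (p - k))‖ ≤ ‖W w i‖ * C ^ p := fun i k hk =>
    (W_add_le w hC i (p - k)).trans
      (mul_le_mul_of_nonneg_left (pow_le_pow_right₀ hC1 (by omega)) (norm_nonneg _))
  have hφ : ∀ k ≤ p, Tendsto (fun i => if k ≤ i ∧ i - k ∈ Ashift then ‖a k‖ / ‖W w i‖ else 0)
      atTop (𝓝 (0 : ℝ)) := by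
    intro k hk
    rw [Metric.tendsto_atTop']
    intro η hη
    have h1 := (tendsto_atTop.mp hAt) ((‖a k‖ + 1) * C ^ p / η)
    rw [eventually_inf_principal, eventually_atTop] at h1
    obtain ⟨N, hN⟩ := h1
    refine ⟨N, fun i hi => ?_⟩
    split_ifs with h
    · have h2 := hN (i + (p - k)) (by omega) (by
        have := h.2
        rw [hAshift, Set.mem_ofPred_eq] at this
        rwa [show i + (p - k) = i - k + p by omega])
      have h3 := h2.trans (hCb i k hk)
      have hCp : 0 < C ^ p := by positivity
      rw [div_le_iff₀ hη] at h3
      have h4 : ‖a k‖ + 1 ≤ ‖W w i‖ * η := by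
        refine le_of_mul_le_mul_right ?_ hCp
        linarith
      rw [dist_zero_right, Real.norm_of_nonneg (by positivity), div_lt_iff₀ (hWpos i)]
      linarith
    · simpa using hη
  have hΦ : Tendsto (fun i => ∑ k ∈ Finset.range (p + 1),
      if k ≤ i ∧ i - k ∈ Ashift then ‖a k‖ / ‖W w i‖ else 0) atTop (𝓝 (0 : ℝ)) := by
    have := tendsto_finsetSum (Finset.range (p + 1)) (fun k hk => hφ k (by
      have := Finset.mem_range.mp hk; omega))
    simpa using this
  refine ⟨δ, fun U hU ⟨u, hu⟩ => ?_⟩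
  obtain ⟨η, hη, hηU⟩ := Metric.isOpen_iff.mp hU u hu
  obtain ⟨r, hr⟩ := (Metric.tendsto_atTop.mp (tendsto_C u)) (η / 3) (by positivity)
  obtain ⟨s, hs⟩ := (Metric.tendsto_atTop.mp hΦ) (η / 3) (by positivity)
  set N := max r s with hN
  set S : Set ℕ := Ashift \ Set.Iic N with hS
  let g : ℕ → 𝕜 := fun i => ∑ k ∈ Finset.range (p + 1),
    if k ≤ i ∧ i - k ∈ S then a k / W w i else 0
  have hgle : ∀ i, ‖g i‖ ≤ ∑ k ∈ Finset.range (p + 1),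
      if k ≤ i ∧ i - k ∈ Ashift then ‖a k‖ / ‖W w i‖ else 0 := by
    intro i
    refine (norm_sum_le _ _).trans (Finset.sum_le_sum fun k _ => ?_)
    by_cases h : k ≤ i ∧ i - k ∈ S
    · rw [if_pos h, if_pos ⟨h.1, h.2.1⟩, norm_div]
    · rw [if_neg h, norm_zero]
      split_ifs <;> positivity
  have hgt : Tendsto g atTop (𝓝 0) := squeeze_zero_norm hgle hΦ
  have hgsmall : ∀ i, ‖g i‖ ≤ η / 3 := by
    intro i
    by_cases hi : i ≤ N
    · have : g i = 0 := by
        refine Finset.sum_eq_zero fun k _ => if_neg ?_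
        rintro ⟨_, _, h⟩
        simp only [Set.mem_Iic] at h
        omega
      rw [this, norm_zero]; positivity
    · have h1 := hs i (by omega)
      rw [dist_zero_right] at h1
      exact (hgle i).trans ((le_abs_self _).trans h1.le)
  let x : C₀(ℕ, 𝕜) := mkC (fun i => (if i ≤ N then u i else 0) + g i) (by
    simpa using (fin_tendsto (fun i => if i ≤ N then u i else 0) N
      (fun i hi => by simp [hi])).add hgt)
  have hxv : ∀ i, x i = (if i ≤ N then u i else 0) + g i := fun i => rfl
  refine ⟨x, hηU ?_, ?_⟩
  · refine (dist_le_of x u (c := 2 * (η / 3)) (by positivity) fun i => ?_).trans_lt (by linarith)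
    rw [hxv]
    split_ifs with h
    · rw [add_sub_cancel_left]; linarith [hgsmall i]
    · have h1 := hr i (by omega)
      rw [dist_zero_right] at h1
      rw [zero_add]
      linarith [norm_sub_le (g i) (u i), hgsmall i]
  · refine Set.mem_iInter.mpr fun μ => ?_
    obtain ⟨F, hF⟩ := hA.finHered δ μ _ (Set.mem_iInter.mp (hδ N) μ)
    refine hF _ fun n hn => ?_
    have hnS : n ∈ S := hn.1
    have hnA : n ∈ Ashift := hnS.1
    have hnN : N < n := by simpa using hnS.2
    refine hεV ((dist_le_of _ v (c := 2 * (ε / 3)) (by positivity) fun j => ?_).trans_lt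
      (by linarith))
    have hit := iter_apply w Bw hBw n x j
    rw [hxv, if_neg (by omega), zero_add] at hit
    have hWg : W w (n + j) * g (n + j) = ∑ k ∈ Finset.range (p + 1),
        if k ≤ n + j ∧ n + j - k ∈ S then a k else 0 := by
      simp only [g, Finset.mul_sum]
      refine Finset.sum_congr rfl fun k _ => ?_
      split_ifs
      · exact mul_div_cancel₀ _ (W_ne w hw0 _)
      · simp
    rw [hWg] at hit
    by_cases hj : j ≤ p
    · rw [Finset.sum_eq_single j] at hit
      · rw [if_pos ⟨by omega, by simpa using hnS⟩] at hit
        have := mul_left_cancel₀ (W_ne w hw0 j) hit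
        rw [this, sub_self, norm_zero]; positivity
      · intro k hk hkj
        have hkp := Finset.mem_range.mp hk
        refine if_neg ?_
        rintro ⟨h1, h2, -⟩
        rcases lt_or_gt_of_ne hkj with h | h
        · have := hsep _ h2 n hnA (by omega)
          omega
        · have := hsep n hnA _ h2 (by omega)
          omega
      · intro h
        exact absurd (Finset.mem_range.mpr (by omega)) h
    · have hvj := hp j (by omega)
      rw [dist_zero_right] at hvj
      have hB : ‖((⇑Bw)^[n] x) j‖ ≤ ε / 3 := by
        by_cases hex : ∃ k ≤ p, k ≤ n + j ∧ n + j - k ∈ S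
        · obtain ⟨k, hk, h1, h2⟩ := hex
          have h3 := hMshift _ h2.1 n hnA (by omega)
          rw [show n + j - k - n + p = j + (p - k) by omega] at h3
          have h4 := h3.trans_le (hCb j k hk)
          have h5 : ‖W w j‖ * ‖((⇑Bw)^[n] x) j‖ ≤ R := by
            rw [← norm_mul, hit]
            refine (norm_sum_le _ _).trans (Finset.sum_le_sum fun k _ => ?_)
            split_ifs
            · exact le_rfl
            · simp
          have hCp : 0 < C ^ p := by positivity
          have h6 : R * (3 / ε) ≤ ‖W w j‖ := by
            refine le_of_mul_le_mul_right ?_ hCp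
            linarith
          have h7 : R ≤ ‖W w j‖ * (ε / 3) := by
            have : R * (3 / ε) * (ε / 3) = R := by field_simp
            nlinarith
          exact le_of_mul_le_mul_left (h5.trans h7) (hWpos j)
        · rw [Finset.sum_eq_zero] at hit
          · have := (mul_eq_zero.mp hit).resolve_left (W_ne w hw0 j)
            rw [this, norm_zero]; positivity
          · intro k hk
            have hkp := Finset.mem_range.mp hk
            exact if_neg fun h => hex ⟨k, by omega, h⟩
      linarith [norm_sub_le (((⇑Bw)^[n] x) j) (v j)]

end ShiftAux

/-- Characterization of `𝒜`-hypercyclic weighted backward shifts on `c₀` for u.f.i. upper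
Furstenberg families: for a bounded sequence `w` of nonzero scalars, the weighted backward
shift `B_w` (given as the continuous linear operator `Bw` with `(Bw x) n = w (n+1) * x (n+1)`)
is `𝒜`-hypercyclic on `c₀` iff for any `p ≥ 0` and `M > 0` there is `A ∈ 𝒜` with
`A ⊆ [p,∞)` such that (i) `|w₁ ⋯ w_n| → ∞` as `n → ∞` along `A`, and (ii) for any
`n, m ∈ A` with `n > m`, `|w₁ ⋯ w_{n-m+p}| > M`. -/
theorem weightedShift_AHypercyclic_iff_c₀ {𝕜 : Type*} [RCLike 𝕜]
    (w : ℕ → 𝕜) (hw0 : ∀ n, w n ≠ 0) (hwb : ∃ C : ℝ, ∀ n, ‖w n‖ ≤ C)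
    (Bw : C₀(ℕ, 𝕜) →L[𝕜] C₀(ℕ, 𝕜))
    (hBw : ∀ (x : C₀(ℕ, 𝕜)) (n : ℕ), Bw x n = w (n + 1) * x (n + 1))
    {D M : Type*} (𝒜 : Set (Set ℕ)) (Adm : D → M → Set (Set ℕ))
    (hA : IsUpperFurstenberg 𝒜 Adm) (hufi : UFI 𝒜 Adm) :
    (∃ x, AUniv 𝒜 (fun n => (⇑Bw)^[n]) x) ↔
      ∀ p : ℕ, ∀ Mc : ℝ, 0 < Mc → ∃ A ∈ 𝒜, (∀ n ∈ A, p ≤ n) ∧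
        Filter.Tendsto (fun n : ℕ => ‖∏ ν ∈ Finset.Icc 1 n, w ν‖)
          (Filter.atTop ⊓ Filter.principal A) Filter.atTop ∧
        (∀ n ∈ A, ∀ m ∈ A, m < n → Mc < ‖∏ ν ∈ Finset.Icc 1 (n - m + p), w ν‖) := by
  exact ⟨fun ⟨x, hx⟩ p Mc hM => ShiftAux.forward w hw0 Bw hBw 𝒜 Adm hA hufi x hx p Mc hM,
    fun H => ShiftAux.backward w hw0 hwb Bw hBw 𝒜 Adm hA hufi H⟩
end

section
/- Let w = (w_n)_{n≥1} be a bounded sequence of nonzero scalars and 𝒜 a finitely invariant Furstenberg family. Then the weighted backward shift B_w is 𝒜-hypercyclic on c₀ if and only if there exist a sequence (M_p)_{p≥1} of positive numbers with M_p → ∞ and a sequence (A_p)_{p≥1} of pairwise disjoint sets in 𝒜 such that (i) for any p ≥ 1, |w_1 w_2 ⋯ w_{n+p}| → ∞ as n → ∞ along n ∈ A_p, and (ii) for any n ∈ A_p and m ∈ A_q with p ≤ q and n ≠ m, |w_1 w_2 ⋯ w_{|n−m|+j}| > M_q, where j ranges over 0, …, p if n > m and over 0, …, q if n < m. -/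
open Filter Topology
open scoped Classical ZeroAtInfty


/-- A Furstenberg family (nonempty and hereditary upward). -/
def FurstenbergFamily (𝒜 : Set (Set ℕ)) : Prop :=
  𝒜.Nonempty ∧ ∀ A ∈ 𝒜, ∀ B : Set ℕ, A ⊆ B → B ∈ 𝒜

/-- A family of subsets of ℕ is finitely invariant (f.i.) if `A ∈ 𝒜` implies
`A \ [0,n] ∈ 𝒜` for all `n`. -/
def FinInvariant (𝒜 : Set (Set ℕ)) : Prop :=
  ∀ A ∈ 𝒜, ∀ n : ℕ, (A \ Set.Iic n) ∈ 𝒜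

namespace WShift

variable {𝕜 : Type*} [RCLike 𝕜]

noncomputable def P (w : ℕ → 𝕜) (n : ℕ) : 𝕜 := ∏ ν ∈ Finset.Icc 1 n, w ν

lemma P_succ (w : ℕ → 𝕜) (n : ℕ) : P w (n + 1) = P w n * w (n + 1) := by
  unfold P
  rw [Finset.prod_Icc_succ_top (by omega)]

lemma P_ne (w : ℕ → 𝕜) (hw0 : ∀ n, w n ≠ 0) (n : ℕ) : P w n ≠ 0 :=
  Finset.prod_ne_zero_iff.2 fun i _ => hw0 i

lemma P_pos (w : ℕ → 𝕜) (hw0 : ∀ n, w n ≠ 0) (n : ℕ) : 0 < ‖P w n‖ :=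
  norm_pos_iff.2 (P_ne w hw0 n)

lemma iter (w : ℕ → 𝕜) (Bw : C₀(ℕ, 𝕜) →L[𝕜] C₀(ℕ, 𝕜))
    (hBw : ∀ (x : C₀(ℕ, 𝕜)) (n : ℕ), Bw x n = w (n + 1) * x (n + 1)) (n k : ℕ) :
    ∀ x : C₀(ℕ, 𝕜), P w k * ((⇑Bw)^[n] x) k = P w (n + k) * x (n + k) := by
  induction n with
  | zero => intro x; simp
  | succ n ih =>
    intro x
    rw [Function.iterate_succ_apply, ih, hBw, show n + 1 + k = n + k + 1 by omega, P_succ]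
    ring

lemma exists_c0 (f : ℕ → 𝕜) (hf : Tendsto f atTop (𝓝 0)) : ∃ x : C₀(ℕ, 𝕜), ∀ n, x n = f n := by
  refine ⟨⟨⟨f, continuous_of_discreteTopology⟩, ?_⟩, fun n => rfl⟩
  rw [Filter.cocompact_eq_cofinite, Nat.cofinite_eq_atTop]
  exact hf

lemma c0_tendsto (x : C₀(ℕ, 𝕜)) : Tendsto (fun n => x n) atTop (𝓝 0) := by
  have := x.zero_at_infty'
  rw [Filter.cocompact_eq_cofinite, Nat.cofinite_eq_atTop] at this
  exact this

lemma c0_apply_le (x y : C₀(ℕ, 𝕜)) (n : ℕ) : ‖x n - y n‖ ≤ dist x y := by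
  rw [← ZeroAtInftyContinuousMap.dist_toBCF_eq_dist, ← dist_eq_norm]
  exact BoundedContinuousFunction.dist_coe_le_dist (f := x.toBCF) (g := y.toBCF) n

lemma c0_dist_le (x y : C₀(ℕ, 𝕜)) (r : ℝ) (hr : 0 ≤ r) (h : ∀ n, ‖x n - y n‖ ≤ r) :
    dist x y ≤ r := by
  rw [← ZeroAtInftyContinuousMap.dist_toBCF_eq_dist]
  refine (BoundedContinuousFunction.dist_le hr).2 fun n => ?_
  rw [dist_eq_norm]
  exact h n

lemma exists_targets : ∃ c : ℕ → ℕ → 𝕜, (∀ s k, s < k → c s k = 0) ∧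
    ∀ (x : C₀(ℕ, 𝕜)) (δ : ℝ), 0 < δ → ∃ s : ℕ, 1 / ((s : ℝ) + 1) < δ ∧
      ∀ k, ‖c s k - x k‖ ≤ δ := by
  obtain ⟨F, hF⟩ := exists_surjective_nat (ℕ →₀ ℕ)
  let d : ℕ → 𝕜 := fun n => if n = 0 then 0 else TopologicalSpace.denseSeq 𝕜 (n - 1)
  refine ⟨fun s k => if k ≤ s then d (F s.unpair.1 k) else 0, ?_, ?_⟩
  · intro s k h
    simp [h]
  · intro x δ hδ
    have h1 : ∀ k, ∃ i, ‖d i - x k‖ ≤ δ := by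
      intro k
      obtain ⟨i, hi⟩ := (TopologicalSpace.denseRange_denseSeq 𝕜).exists_dist_lt (x k) hδ
      refine ⟨i + 1, ?_⟩
      rw [dist_comm, dist_eq_norm] at hi
      simpa [d] using hi.le
    choose g hg using h1
    obtain ⟨N, hN⟩ := (Metric.tendsto_atTop.1 (c0_tendsto x)) δ hδ
    obtain ⟨a, ha⟩ := hF (Finsupp.onFinset (Finset.range N) (fun k => if k < N then g k else 0)
      (by intro k hk; simp at hk ⊢; exact hk.1))
    obtain ⟨b, hb⟩ := exists_nat_gt (1 / δ)
    refine ⟨Nat.pair a (max b N), ?_, ?_⟩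
    · have h2 : b ≤ Nat.pair a (max b N) := (le_max_left _ _).trans (Nat.right_le_pair _ _)
      have h3 : (b : ℝ) ≤ (Nat.pair a (max b N) : ℕ) := by exact_mod_cast h2
      rw [one_div_lt (by positivity) hδ]
      linarith
    · intro k
      have h2 : N ≤ Nat.pair a (max b N) := (le_max_right _ _).trans (Nat.right_le_pair _ _)
      simp only [Nat.unpair_pair, ha, Finsupp.onFinset_apply]
      by_cases hk : k < N
      · rw [if_pos (by omega), if_pos hk]
        exact hg k
      · have h4 := hN k (by omega)
        rw [dist_zero_right] at h4
        simp [hk, d, h4.le]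

/-- The key construction. -/
lemma construct (w : ℕ → 𝕜) (hw0 : ∀ n, w n ≠ 0) (u : ℕ → ℕ → 𝕜) (D : ℕ → Set ℕ) (b : ℕ → ℝ)
    (hbW : ∀ s, ∀ k ≤ s, ‖P w k‖ ≤ b s)
    (hbu : ∀ t : ℕ, ∀ s ≤ t, ∀ k ≤ s, ((t : ℝ) + 1) * ‖u s k‖ ≤ b t)
    (hdis : ∀ s t n, n ∈ D s → n ∈ D t → s = t)
    (hsep : ∀ s t, ∀ n ∈ D s, ∀ m ∈ D t, n < m → ∀ j ≤ t, b (max s t) < ‖P w (m - n + j)‖)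
    (hbig : ∀ s, ∀ m ∈ D s, ∀ j ≤ s, b s ≤ ‖P w (m + j)‖)
    (hinf : ∀ s, ∀ R : ℝ, ∃ N, ∀ m ∈ D s, ∀ j ≤ s, N ≤ m + j → R ≤ ‖P w (m + j)‖) :
    ∃ y : ℕ → 𝕜, Tendsto (fun i => y i / P w i) atTop (𝓝 0) ∧
      (∀ s, ∀ n ∈ D s, ∀ k ≤ s, y (n + k) = u s k) ∧
      (∀ s, ∀ n ∈ D s, ∀ k, s < k → ‖y (n + k) / P w k‖ ≤ 1 / ((s : ℝ) + 1)) := by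
  have hgap : ∀ s t, ∀ n ∈ D s, ∀ m ∈ D t, n < m → max s t < m - n := by
    intro s t n hn m hm hnm
    by_contra! hcon
    have h1 := hsep s t n hn m hm hnm 0 (Nat.zero_le _)
    have h2 := hbW (max s t) (m - n) hcon
    simp at h1
    linarith
  have huniq : ∀ s t, ∀ n ∈ D s, ∀ m ∈ D t, ∀ k ≤ s, ∀ l ≤ t, n + k = m + l →
      s = t ∧ k = l := by
    intro s t n hn m hm k hk l hl h
    have h3 : n = m := by
      rcases lt_trichotomy n m with h1 | h1 | h1
      · have := hgap s t n hn m hm h1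
        omega
      · exact h1
      · have := hgap t s m hm n hn h1
        omega
    subst h3
    exact ⟨hdis s t n hn hm, by omega⟩
  let Q : ℕ → ℕ × ℕ × ℕ → Prop := fun i q => q.2.1 ∈ D q.1 ∧ q.2.2 ≤ q.1 ∧ q.2.1 + q.2.2 = i
  let y : ℕ → 𝕜 := fun i => if h : ∃ q, Q i q then u h.choose.1 h.choose.2.2 else 0
  have hy1 : ∀ s, ∀ n ∈ D s, ∀ k ≤ s, y (n + k) = u s k := by
    intro s n hn k hk
    have h : ∃ q, Q (n + k) q := ⟨(s, n, k), hn, hk, rfl⟩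
    have h2 := h.choose_spec
    obtain ⟨e1, e2⟩ := huniq _ _ _ h2.1 _ hn _ h2.2.1 _ hk h2.2.2
    simp only [y, dif_pos h]
    rw [e2, e1]
  have hy0 : ∀ i, y i = 0 ∨ ∃ s, ∃ n ∈ D s, ∃ k ≤ s, n + k = i := by
    intro i
    by_cases h : ∃ q, Q i q
    · right
      obtain ⟨q, h1, h2, h3⟩ := h
      exact ⟨_, _, h1, _, h2, h3⟩
    · left
      simp only [y, dif_neg h]
  refine ⟨y, ?_, hy1, ?_⟩
  · rw [Metric.tendsto_atTop]
    intro ε hε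
    obtain ⟨T, hT⟩ := exists_nat_gt (1 / ε)
    have hR : ∀ s, ∃ R : ℝ, ∀ k ≤ s, ‖u s k‖ / ε + 1 ≤ R := by
      intro s
      refine ⟨b s / ε + 1, fun k hk => ?_⟩
      have h1 := hbu s s le_rfl k hk
      have : ‖u s k‖ ≤ b s := by nlinarith [norm_nonneg (u s k), (Nat.cast_nonneg s : (0:ℝ) ≤ s)]
      gcongr
    choose R hR using hR
    choose N hN using fun s => hinf s (R s)
    refine ⟨∑ s ∈ Finset.range T, N s, fun i hi => ?_⟩
    rw [dist_zero_right, norm_div, div_lt_iff₀ (P_pos w hw0 i)]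
    rcases hy0 i with h | ⟨s, n, hn, k, hk, rfl⟩
    · rw [h, norm_zero]
      exact mul_pos hε (P_pos w hw0 i)
    · rw [hy1 s n hn k hk]
      by_cases hs : s < T
      · have h1 : N s ≤ ∑ s ∈ Finset.range T, N s :=
          Finset.single_le_sum (f := N) (fun _ _ => Nat.zero_le _) (Finset.mem_range.2 hs)
        have h2 := hN s n hn k hk (h1.trans hi)
        have h3 := hR s k hk
        have h4 : ‖u s k‖ / ε < ‖P w (n + k)‖ := by linarith
        rw [div_lt_iff₀ hε] at h4
        linarith
      · have h1 := hbu s s le_rfl k hk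
        have h2 := hbig s n hn k hk
        have h3 : (T : ℝ) ≤ s := by exact_mod_cast not_lt.1 hs
        rw [div_lt_iff₀ hε] at hT
        have hP := P_pos w hw0 (n + k)
        have h4 : 1 < ((s : ℝ) + 1) * ε := by nlinarith
        have h5 : ((s : ℝ) + 1) * ‖u s k‖ < ((s : ℝ) + 1) * (ε * ‖P w (n + k)‖) := by nlinarith
        exact lt_of_mul_lt_mul_left h5 (by positivity)
  · intro s n hn i hi
    rcases hy0 (n + i) with h | ⟨t, m, hm, j, hj, h⟩
    · rw [h]
      simp
      positivity
    · have hnm : n < m := by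
        rcases lt_trichotomy n m with h1 | h1 | h1
        · exact h1
        · subst h1
          have := hdis s t n hn hm
          omega
        · have := hgap t s m hm n hn h1
          omega
      have h1 := hsep s t n hn m hm hnm j hj
      have h2 : m - n + j = i := by omega
      rw [h2] at h1
      rw [← h, hy1 t m hm j hj]
      have h3 := hbu (max s t) t (le_max_right _ _) j hj
      have h4 : (s : ℝ) ≤ ((max s t : ℕ) : ℝ) := by exact_mod_cast le_max_left s t
      rw [norm_div, div_le_div_iff₀ (P_pos w hw0 i) (by positivity)]
      nlinarith [norm_nonneg (u t j)]

lemma P_bound (w : ℕ → 𝕜) (C : ℝ) (hC : 0 ≤ C) (h : ∀ n, ‖w n‖ ≤ C) (a d : ℕ) :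
    ‖P w (a + d)‖ ≤ ‖P w a‖ * C ^ d := by
  induction d with
  | zero => simp
  | succ d ih =>
    rw [← add_assoc, P_succ, norm_mul, pow_succ, ← mul_assoc]
    exact mul_le_mul ih (h _) (norm_nonneg _) (by positivity)

lemma backward (w : ℕ → 𝕜) (hw0 : ∀ n, w n ≠ 0) (hwb : ∃ C : ℝ, ∀ n, ‖w n‖ ≤ C)
    (Bw : C₀(ℕ, 𝕜) →L[𝕜] C₀(ℕ, 𝕜))
    (hBw : ∀ (x : C₀(ℕ, 𝕜)) (n : ℕ), Bw x n = w (n + 1) * x (n + 1))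
    (𝒜 : Set (Set ℕ)) (hfur : FurstenbergFamily 𝒜) (hfi : FinInvariant 𝒜)
    (M : ℕ → ℝ) (hM : Tendsto M atTop atTop) (A : ℕ → Set ℕ) (hA : ∀ p, 1 ≤ p → A p ∈ 𝒜)
    (hdis : ∀ p, 1 ≤ p → ∀ r, 1 ≤ r → p ≠ r → Disjoint (A p) (A r))
    (hi : ∀ p, 1 ≤ p → Tendsto (fun n : ℕ => ‖P w (n + p)‖) (atTop ⊓ 𝓟 (A p)) atTop)
    (hii : ∀ p r, 1 ≤ p → p ≤ r → ∀ n ∈ A p, ∀ m ∈ A r, n ≠ m →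
            (m < n → ∀ j ≤ p, M r < ‖P w (n - m + j)‖) ∧
            (n < m → ∀ j ≤ r, M r < ‖P w (m - n + j)‖)) :
    ∃ x : C₀(ℕ, 𝕜), ∀ V : Set C₀(ℕ, 𝕜), IsOpen V → V.Nonempty →
        {n : ℕ | (⇑Bw)^[n] x ∈ V} ∈ 𝒜 := by
  obtain ⟨c, hc0, hc⟩ := exists_targets (𝕜 := 𝕜)
  obtain ⟨C0, hC0⟩ := hwb
  obtain ⟨C, hC1, hC⟩ : ∃ C : ℝ, 1 ≤ C ∧ ∀ n, ‖w n‖ ≤ C :=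
    ⟨max C0 1, le_max_right _ _, fun n => (hC0 n).trans (le_max_left _ _)⟩
  let u : ℕ → ℕ → 𝕜 := fun s k => P w k * c s k
  let b : ℕ → ℝ := fun t => ∑ k ∈ Finset.range (t + 1), ‖P w k‖ +
    ((t : ℝ) + 1) * ∑ s ∈ Finset.range (t + 1), ∑ k ∈ Finset.range (s + 1), ‖u s k‖
  have hbW : ∀ s, ∀ k ≤ s, ‖P w k‖ ≤ b s := by
    intro s k hk
    have h1 : ‖P w k‖ ≤ ∑ k ∈ Finset.range (s + 1), ‖P w k‖ :=
      Finset.single_le_sum (f := fun k => ‖P w k‖) (fun _ _ => norm_nonneg _)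
        (Finset.mem_range.2 (by omega))
    have h2 : 0 ≤ ((s : ℝ) + 1) *
      ∑ s ∈ Finset.range (s + 1), ∑ k ∈ Finset.range (s + 1), ‖u s k‖ := by positivity
    simp only [b]
    linarith
  have hbu : ∀ t : ℕ, ∀ s ≤ t, ∀ k ≤ s, ((t : ℝ) + 1) * ‖u s k‖ ≤ b t := by
    intro t s hs k hk
    have h1 : ‖u s k‖ ≤ ∑ k ∈ Finset.range (s + 1), ‖u s k‖ :=
      Finset.single_le_sum (f := fun k => ‖u s k‖) (fun _ _ => norm_nonneg _)
        (Finset.mem_range.2 (by omega))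
    have h2 : ∑ k ∈ Finset.range (s + 1), ‖u s k‖ ≤
        ∑ s ∈ Finset.range (t + 1), ∑ k ∈ Finset.range (s + 1), ‖u s k‖ :=
      Finset.single_le_sum (f := fun s => ∑ k ∈ Finset.range (s + 1), ‖u s k‖)
        (fun _ _ => Finset.sum_nonneg fun _ _ => norm_nonneg _)
        (Finset.mem_range.2 (by omega))
    have h3 : 0 ≤ ∑ k ∈ Finset.range (t + 1), ‖P w k‖ := by positivity
    have h4 := mul_le_mul_of_nonneg_left (h1.trans h2) (show (0 : ℝ) ≤ (t : ℝ) + 1 by positivity)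
    simp only [b]
    linarith
  obtain ⟨φ, hφ, hφ2⟩ := Filter.extraction_forall_of_eventually
    (P := fun s k => 1 ≤ k ∧ b s < M k)
    (fun s => (eventually_ge_atTop 1).and (hM.eventually_gt_atTop (b s)))
  -- growth along the sets
  have hinf0 : ∀ s, ∀ R : ℝ, ∃ N, ∀ m ∈ A (φ s), N ≤ m → ∀ j ≤ s, R ≤ ‖P w (m + j)‖ := by
    intro s R
    have h1 := (hi (φ s) (hφ2 s).1).eventually_ge_atTop (max R 0 * C ^ (φ s))
    rw [eventually_inf_principal, eventually_atTop] at h1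
    obtain ⟨N, hN⟩ := h1
    refine ⟨N, fun m hm hNm j hj => ?_⟩
    have h2 := hN m hNm hm
    have hs : s ≤ φ s := hφ.le_apply
    have h3 := P_bound w C (by linarith) hC (m + j) (φ s - j)
    rw [show m + j + (φ s - j) = m + φ s by omega] at h3
    have h4 : C ^ (φ s - j) ≤ C ^ (φ s) := pow_le_pow_right₀ hC1 (by omega)
    have h5 : ‖P w (m + j)‖ * C ^ (φ s - j) ≤ ‖P w (m + j)‖ * C ^ (φ s) := by gcongr
    have h6 : max R 0 * C ^ (φ s) ≤ ‖P w (m + j)‖ * C ^ (φ s) := by linarith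
    exact (le_max_left _ _).trans (le_of_mul_le_mul_right h6 (by positivity))
  choose N hN using fun s => hinf0 s (b s)
  let D : ℕ → Set ℕ := fun s => A (φ s) \ Set.Iic (N s)
  obtain ⟨y, hy0, hy1, hy2⟩ := construct w hw0 u D b hbW hbu
    (by
      intro s t n hs ht
      by_contra hst
      exact Set.disjoint_left.1 (hdis _ (hφ2 s).1 _ (hφ2 t).1 (hφ.injective.ne hst)) hs.1 ht.1)
    (by
      intro s t n hn m hm hnm j hj
      have hjt : j ≤ φ t := hj.trans hφ.le_apply
      rcases le_total s t with h | h
      · rw [max_eq_right h]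
        exact (hφ2 t).2.trans ((hii _ _ (hφ2 s).1 (hφ.monotone h) n hn.1 m hm.1 hnm.ne).2 hnm j hjt)
      · rw [max_eq_left h]
        exact (hφ2 s).2.trans
          ((hii _ _ (hφ2 t).1 (hφ.monotone h) m hm.1 n hn.1 hnm.ne').1 hnm j hjt))
    (by
      intro s m hm j hj
      have h2 : N s < m := by simpa using hm.2
      exact hN s m hm.1 h2.le j hj)
    (by
      intro s R
      obtain ⟨N0, hN0⟩ := hinf0 s R
      exact ⟨N0 + s, fun m hm j hj h => hN0 m hm.1 (by omega) j hj⟩)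
  obtain ⟨x, hx⟩ := exists_c0 _ hy0
  refine ⟨x, fun V hV ⟨v, hv⟩ => ?_⟩
  obtain ⟨δ, hδ, hball⟩ := Metric.isOpen_iff.1 hV v hv
  obtain ⟨s, hs1, hs2⟩ := hc v (δ / 3) (by positivity)
  refine hfur.2 (D s) (hfi _ (hA _ (hφ2 s).1) _) _ fun n hn => hball ?_
  rw [Metric.mem_ball]
  have hiter : ∀ k, ((⇑Bw)^[n] x) k = y (n + k) / P w k := by
    intro k
    have h1 := iter w Bw hBw n k x
    rw [hx, mul_div_cancel₀ _ (P_ne w hw0 _)] at h1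
    rw [eq_div_iff (P_ne w hw0 k), ← h1, mul_comm]
  refine lt_of_le_of_lt (c0_dist_le _ _ (2 * δ / 3) (by positivity) fun k => ?_)
    (by linarith)
  have h3 : ‖((⇑Bw)^[n] x) k - c s k‖ ≤ 1 / ((s : ℝ) + 1) := by
    rw [hiter]
    by_cases hk : k ≤ s
    · rw [hy1 s n hn k hk]
      simp only [u]
      rw [mul_div_cancel_left₀ _ (P_ne w hw0 k), sub_self, norm_zero]
      positivity
    · rw [hc0 s k (by omega), sub_zero]
      exact hy2 s n hn k (by omega)
  have h4 := norm_sub_le_norm_sub_add_norm_sub (((⇑Bw)^[n] x) k) (c s k) (v k)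
  have h5 := hs2 k
  linarith

lemma forward (w : ℕ → 𝕜) (hw0 : ∀ n, w n ≠ 0)
    (Bw : C₀(ℕ, 𝕜) →L[𝕜] C₀(ℕ, 𝕜))
    (hBw : ∀ (x : C₀(ℕ, 𝕜)) (n : ℕ), Bw x n = w (n + 1) * x (n + 1))
    (𝒜 : Set (Set ℕ))
    (x : C₀(ℕ, 𝕜)) (hx : ∀ V : Set C₀(ℕ, 𝕜), IsOpen V → V.Nonempty →
        {n : ℕ | (⇑Bw)^[n] x ∈ V} ∈ 𝒜) :
      ∃ M : ℕ → ℝ, (∀ p, 0 < M p) ∧ Filter.Tendsto M Filter.atTop Filter.atTop ∧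
        ∃ A : ℕ → Set ℕ, (∀ p, 1 ≤ p → A p ∈ 𝒜) ∧
          (∀ p, 1 ≤ p → ∀ r, 1 ≤ r → p ≠ r → Disjoint (A p) (A r)) ∧
          (∀ p, 1 ≤ p → Filter.Tendsto (fun n : ℕ => ‖P w (n + p)‖)
            (Filter.atTop ⊓ Filter.principal (A p)) Filter.atTop) ∧
          (∀ p r, 1 ≤ p → p ≤ r → ∀ n ∈ A p, ∀ m ∈ A r, n ≠ m →
            (m < n → ∀ j ≤ p, M r < ‖P w (n - m + j)‖) ∧
            (n < m → ∀ j ≤ r, M r < ‖P w (m - n + j)‖)) := by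
  let d : ℕ → ℕ → ℕ := fun p k => Nat.pair p k + 1
  have hv : ∀ p, ∃ v : C₀(ℕ, 𝕜), ∀ k, v k = if k ≤ p then (d p k : 𝕜) / P w k else 0 := by
    intro p
    refine exists_c0 _ (tendsto_const_nhds.congr' ?_)
    filter_upwards [eventually_gt_atTop p] with k hk
    rw [if_neg (by omega)]
  choose v hv using hv
  let S : ℕ → ℝ := fun p => ∑ k ∈ Finset.range (p + 1), ‖P w k‖ + p + 2
  have hSW : ∀ p, ∀ k ≤ p, ‖P w k‖ ≤ S p := by
    intro p k hk
    have h1 : ‖P w k‖ ≤ ∑ k ∈ Finset.range (p + 1), ‖P w k‖ :=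
      Finset.single_le_sum (f := fun k => ‖P w k‖) (fun _ _ => norm_nonneg _)
        (Finset.mem_range.2 (by omega))
    have : (0 : ℝ) ≤ p := Nat.cast_nonneg p
    simp only [S]
    linarith
  have hSp : ∀ p : ℕ, (p : ℝ) + 2 ≤ S p := by
    intro p
    have h3 : 0 ≤ ∑ k ∈ Finset.range (p + 1), ‖P w k‖ := by positivity
    simp only [S]
    linarith
  have hS0 : ∀ p, 0 < S p := by
    intro p
    have : (0 : ℝ) ≤ p := Nat.cast_nonneg p
    linarith [hSp p]
  let A : ℕ → Set ℕ := fun p => {n | (⇑Bw)^[n] x ∈ Metric.ball (v p) (1 / (2 * S p))}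
  let y : ℕ → 𝕜 := fun i => P w i * x i
  have hcl : ∀ p, ∀ n ∈ A p, ∀ k, 2 * S p * ‖((⇑Bw)^[n] x) k - v p k‖ < 1 := by
    intro p n hn k
    have h1 := lt_of_le_of_lt (c0_apply_le _ (v p) k) (Metric.mem_ball.1 hn)
    have := hS0 p
    rw [lt_div_iff₀ (by positivity)] at h1
    linarith
  have hnear : ∀ p, ∀ n ∈ A p, ∀ k ≤ p, ‖y (n + k) - (d p k : 𝕜)‖ < 1 / 2 := by
    intro p n hn k hk
    have h1 := hcl p n hn k
    rw [hv, if_pos hk] at h1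
    have h2 : y (n + k) - (d p k : 𝕜) = P w k * (((⇑Bw)^[n] x) k - (d p k : 𝕜) / P w k) := by
      rw [mul_sub, iter w Bw hBw, mul_div_cancel₀ _ (P_ne w hw0 k)]
    rw [h2, norm_mul]
    have h3 := mul_le_mul_of_nonneg_right (hSW p k hk)
      (norm_nonneg (((⇑Bw)^[n] x) k - (d p k : 𝕜) / P w k))
    linarith
  have hfar : ∀ p, ∀ n ∈ A p, ∀ i, p < i → 2 * S p * ‖y (n + i)‖ < ‖P w i‖ := by
    intro p n hn i hi
    have h1 := hcl p n hn i
    rw [hv, if_neg (by omega), sub_zero] at h1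
    have h2 : y (n + i) = P w i * ((⇑Bw)^[n] x) i := (iter w Bw hBw n i x).symm
    rw [h2, norm_mul]
    have := P_pos w hw0 i
    nlinarith
  have hlow : ∀ p : ℕ, ∀ n ∈ A p, ∀ k ≤ p, (p : ℝ) + 1 / 2 < ‖y (n + k)‖ := by
    intro p n hn k hk
    have h1 := hnear p n hn k hk
    have h2 := norm_sub_norm_le (d p k : 𝕜) (y (n + k))
    rw [norm_sub_rev, RCLike.norm_natCast] at h2
    have h3 : p + 1 ≤ d p k := Nat.succ_le_succ (Nat.left_le_pair p k)
    have h4 : (p : ℝ) + 1 ≤ d p k := by exact_mod_cast h3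
    linarith
  have huniq : ∀ p r, ∀ n ∈ A p, ∀ m ∈ A r, ∀ k ≤ p, ∀ l ≤ r, n + k = m + l → p = r ∧ k = l := by
    intro p r n hn m hm k hk l hl h
    have h1 := hnear p n hn k hk
    have h2 := hnear r m hm l hl
    rw [h] at h1
    have h3 : ‖(((d p k : ℝ) - (d r l : ℝ) : ℝ) : 𝕜)‖ < 1 := by
      have h4 := norm_sub_le (y (m + l) - (d r l : 𝕜)) (y (m + l) - (d p k : 𝕜))
      rw [show y (m + l) - (d r l : 𝕜) - (y (m + l) - (d p k : 𝕜)) =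
        (((d p k : ℝ) - (d r l : ℝ) : ℝ) : 𝕜) by push_cast; ring] at h4
      linarith
    rw [RCLike.norm_ofReal] at h3
    have h5 : |(d p k : ℤ) - (d r l : ℤ)| < 1 := by exact_mod_cast h3
    have h6 : (d p k : ℤ) - (d r l : ℤ) = 0 := Int.abs_lt_one_iff.1 h5
    have h7 : Nat.pair p k = Nat.pair r l := by
      simp only [d] at h6
      omega
    exact Nat.pair_eq_pair.1 h7
  refine ⟨fun p => ((p : ℝ) + 1) / 2, fun p => by positivity, ?_, A, ?_, ?_, ?_, ?_⟩
  · exact (tendsto_atTop_add_const_right _ _ tendsto_natCast_atTop_atTop).atTop_div_const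
      (by norm_num)
  · intro p _
    refine hx _ Metric.isOpen_ball ⟨v p, Metric.mem_ball_self ?_⟩
    have := hS0 p
    positivity
  · intro p _ r _ hpr
    refine Set.disjoint_left.2 fun n hn hm => hpr ?_
    exact (huniq p r n hn n hm 0 (Nat.zero_le _) 0 (Nat.zero_le _) rfl).1
  · intro p _
    rw [tendsto_atTop]
    intro R
    rw [eventually_inf_principal]
    have h1 := ((c0_tendsto x).comp (tendsto_add_atTop_nat p))
    obtain ⟨N, hN⟩ := (Metric.tendsto_atTop.1 h1) (1 / (2 * (|R| + 1))) (by positivity)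
    filter_upwards [eventually_ge_atTop N] with n hn hnA
    have h2 := hN n hn
    have h3 := hlow p n hnA p le_rfl
    rw [dist_zero_right, lt_div_iff₀ (by positivity)] at h2
    simp only [Function.comp_apply] at h2
    simp only [y, norm_mul] at h3
    have hP := P_pos w hw0 (n + p)
    have : (0 : ℝ) ≤ p := Nat.cast_nonneg p
    have h4 := le_abs_self R
    nlinarith [abs_nonneg R, norm_nonneg (x (n + p))]
  · intro p r _ hpr n hn m hm hnm
    have hp0 : (0 : ℝ) ≤ p := Nat.cast_nonneg p
    have hr0 : (0 : ℝ) ≤ r := Nat.cast_nonneg r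
    constructor
    · intro hlt j hj
      have e : m + (n - m + j) = n + j := by omega
      have hir : r < n - m + j := by
        by_contra! hcon
        have := huniq p r n hn m hm j hj _ hcon e.symm
        omega
      have h1 := hfar r m hm _ hir
      rw [e] at h1
      have h2 := hlow p n hn j hj
      have h3 := hSp r
      show ((r : ℝ) + 1) / 2 < _
      nlinarith
    · intro hlt j hj
      have e : n + (m - n + j) = m + j := by omega
      have hir : p < m - n + j := by
        by_contra! hcon
        have := huniq p r n hn m hm _ hcon j hj e
        omega
      have h1 := hfar p n hn _ hir
      rw [e] at h1
      have h2 := hlow r m hm j hj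
      have h3 := hSp p
      show ((r : ℝ) + 1) / 2 < _
      nlinarith

end WShift

/-- Characterization of `𝒜`-hypercyclic weighted backward shifts on `c₀` for an arbitrary
finitely invariant Furstenberg family `𝒜`: for a bounded sequence `w` of nonzero scalars,
the weighted backward shift `B_w` (given as the continuous linear operator `Bw` with
`(Bw x) n = w (n+1) * x (n+1)`) is `𝒜`-hypercyclic on `c₀` iff there exist positive
numbers `M p → ∞` and pairwise disjoint sets `A p ∈ 𝒜` (`p ≥ 1`) such that
(i) for any `p ≥ 1`, `|w₁ ⋯ w_{n+p}| → ∞` as `n → ∞` along `A p`, and (ii) for any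
`n ∈ A p`, `m ∈ A q` with `p ≤ q` and `n ≠ m`, `|w₁ ⋯ w_{|n-m|+j}| > M q`, where
`j = 0, …, p` if `n > m` and `j = 0, …, q` if `n < m`. -/
theorem weightedShift_AHypercyclic_iff_c₀_arbitraryFamily {𝕜 : Type*} [RCLike 𝕜]
    (w : ℕ → 𝕜) (hw0 : ∀ n, w n ≠ 0) (hwb : ∃ C : ℝ, ∀ n, ‖w n‖ ≤ C)
    (Bw : C₀(ℕ, 𝕜) →L[𝕜] C₀(ℕ, 𝕜))
    (hBw : ∀ (x : C₀(ℕ, 𝕜)) (n : ℕ), Bw x n = w (n + 1) * x (n + 1))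
    (𝒜 : Set (Set ℕ)) (hfur : FurstenbergFamily 𝒜) (hfi : FinInvariant 𝒜) :
    (∃ x : C₀(ℕ, 𝕜), ∀ V : Set C₀(ℕ, 𝕜), IsOpen V → V.Nonempty →
        {n : ℕ | (⇑Bw)^[n] x ∈ V} ∈ 𝒜) ↔
      ∃ M : ℕ → ℝ, (∀ p, 0 < M p) ∧ Filter.Tendsto M Filter.atTop Filter.atTop ∧
        ∃ A : ℕ → Set ℕ, (∀ p, 1 ≤ p → A p ∈ 𝒜) ∧
          (∀ p, 1 ≤ p → ∀ r, 1 ≤ r → p ≠ r → Disjoint (A p) (A r)) ∧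
          (∀ p, 1 ≤ p → Filter.Tendsto (fun n : ℕ => ‖∏ ν ∈ Finset.Icc 1 (n + p), w ν‖)
            (Filter.atTop ⊓ Filter.principal (A p)) Filter.atTop) ∧
          (∀ p r, 1 ≤ p → p ≤ r → ∀ n ∈ A p, ∀ m ∈ A r, n ≠ m →
            (m < n → ∀ j ≤ p, M r < ‖∏ ν ∈ Finset.Icc 1 (n - m + j), w ν‖) ∧
            (n < m → ∀ j ≤ r, M r < ‖∏ ν ∈ Finset.Icc 1 (m - n + j), w ν‖)) := by
  constructor
  · rintro ⟨x, hx⟩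
    exact WShift.forward w hw0 Bw hBw 𝒜 x hx
  · rintro ⟨M, _, hM, A, hA, hdis, hi, hii⟩
    exact WShift.backward w hw0 hwb Bw hBw 𝒜 hfur hfi M hM A hA hdis hi hii
end

section
/- There exists a bounded sequence w = (w_n)_{n≥1} of nonzero scalars such that the weighted backward shift B_w on c₀ is reiteratively hypercyclic but not upper frequently hypercyclic. -/
open Filter Topology
open scoped Classical ZeroAtInfty

namespace RHC

def Ht (s : ℕ → ℕ) (q : ℕ) : ℕ := 2 * s q + q
def aa (s : ℕ → ℕ) (q : ℕ) : ℕ := 2 ^ (q + 2) * (Ht s q + s q + 1)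
def qq (j : ℕ) : ℕ := (Nat.unpair j).1
def LL (s : ℕ → ℕ) (j : ℕ) : ℕ := aa s (qq j) * j + s j
def PP (s : ℕ → ℕ) : ℕ → ℕ
  | 0 => 0
  | (j + 1) => (PP s j + Ht s j + LL s j + 1) * (1 + 2 ^ (j + 1)) + LL s j
def NN (s : ℕ → ℕ) (j : ℕ) : ℕ := (PP s j + Ht s j + LL s j + 1) * (1 + 2 ^ (j + 1))

def EE (s : ℕ → ℕ) (q m : ℕ) : Prop :=
  (∃ i k, 1 ≤ i ∧ k < s q ∧ m = aa s q * i + k) ∨ (NN s q ≤ m + PP s q ∧ m ≤ NN s q + LL s q)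

def PS (s : ℕ → ℕ) (n k : ℕ) : Prop :=
  k = 0 ∨ ∃ q m, EE s q m ∧ n ≤ m ∧ k + m ≤ n + Ht s q

noncomputable def uu (s : ℕ → ℕ) (n : ℕ) : ℕ := Nat.findGreatest (PS s n) n

def FF (s : ℕ → ℕ) (q n : ℕ) : Prop := ∃ m, EE s q m ∧ n ≤ m ∧ m ≤ n + Ht s q

lemma aa_ge (s : ℕ → ℕ) (q : ℕ) : 4 * (Ht s q + s q + 1) ≤ aa s q := by
  unfold aa
  have : 1 ≤ 2 ^ q := Nat.one_le_two_pow
  rw [pow_add]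
  nlinarith [Nat.zero_le (Ht s q + s q + 1)]

lemma NN_ge (s : ℕ → ℕ) (j : ℕ) : PP s j + Ht s j + LL s j + 1 ≤ NN s j := by
  unfold NN
  exact Nat.le_mul_of_pos_right _ (by positivity)

lemma PP_succ (s : ℕ → ℕ) (j : ℕ) : PP s (j + 1) = NN s j + LL s j := rfl

lemma PP_mono (s : ℕ → ℕ) : Monotone (PP s) := by
  apply monotone_nat_of_le_succ
  intro j
  rw [PP_succ]
  have := NN_ge s j
  omega

lemma block_le (s : ℕ → ℕ) {j j' : ℕ} (h : j < j') : NN s j + LL s j ≤ PP s j' := by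
  rw [← PP_succ]; exact PP_mono s h

lemma EE_ge {s : ℕ → ℕ} {q m : ℕ} (h : EE s q m) : Ht s q ≤ m := by
  rcases h with ⟨i, k, hi, hk, rfl⟩ | ⟨h1, h2⟩
  · have := aa_ge s q
    nlinarith
  · have := NN_ge s q
    omega

lemma PS_le {s : ℕ → ℕ} {n k : ℕ} (h : PS s n k) : k ≤ n := by
  rcases h with rfl | ⟨q, m, hE, h1, h2⟩
  · omega
  · have := EE_ge hE
    omega

lemma uu_spec (s : ℕ → ℕ) (n : ℕ) : PS s n (uu s n) :=
  Nat.findGreatest_spec (P := PS s n) (Nat.zero_le n) (Or.inl rfl)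

lemma le_uu {s : ℕ → ℕ} {n k : ℕ} (h : PS s n k) : k ≤ uu s n :=
  Nat.le_findGreatest (PS_le h) h

lemma uu_le (s : ℕ → ℕ) (n : ℕ) : uu s n ≤ n := PS_le (uu_spec s n)

lemma uu_succ (s : ℕ → ℕ) (n : ℕ) : uu s (n + 1) ≤ uu s n + 1 := by
  have h : PS s n (uu s (n + 1) - 1) := by
    rcases uu_spec s (n + 1) with h | ⟨q, m, hE, h1, h2⟩
    · left; omega
    · by_cases h0 : uu s (n + 1) = 0
      · left; omega
      · right; exact ⟨q, m, hE, by omega, by omega⟩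
  have := le_uu h
  omega

lemma uu_EE {s : ℕ → ℕ} {q m : ℕ} (h : EE s q m) : Ht s q ≤ uu s m :=
  le_uu (Or.inr ⟨q, m, h, le_rfl, by omega⟩)

lemma uu_gt {s : ℕ → ℕ} (hs : Monotone s) {r n : ℕ} (h : Ht s r < uu s n) :
    ∃ q, r < q ∧ FF s q n := by
  rcases uu_spec s n with h0 | ⟨q, m, hE, h1, h2⟩
  · omega
  · refine ⟨q, ?_, m, hE, h1, by omega⟩
    by_contra hq
    have h3 : s q ≤ s r := hs (by omega)
    unfold Ht at *
    omega

lemma card_FF (s : ℕ → ℕ) (q N : ℕ) :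
    ((Finset.range (N + 1)).filter (fun n => FF s q n)).card * 2 ^ q ≤ N := by
  set a := aa s q with ha
  set c := Ht s q with hc
  have hsub : (Finset.range (N + 1)).filter (fun n => FF s q n) ⊆
      ((Finset.Icc 1 (2 * N / a)).biUnion (fun i => Finset.Ico (a * i - c) (a * i + s q))) ∪
      (if NN s q ≤ N + PP s q + c then Finset.Icc (NN s q - PP s q - c) (NN s q + LL s q) else ∅) := by
    intro n hn
    simp only [Finset.mem_filter, Finset.mem_range] at hn
    obtain ⟨hnN, m, hE, h1, h2⟩ := hn
    rw [Finset.mem_union]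
    have ha4 := aa_ge s q
    rw [← ha, ← hc] at ha4
    rw [← hc] at h2
    rcases hE with ⟨i, k, hi, hk, hm⟩ | ⟨h3, h4⟩
    · left
      rw [← ha] at hm
      rw [Finset.mem_biUnion]
      refine ⟨i, ?_, ?_⟩
      · rw [Finset.mem_Icc]
        refine ⟨hi, ?_⟩
        rw [Nat.le_div_iff_mul_le (by omega)]
        have : a ≤ a * i := Nat.le_mul_of_pos_right _ hi
        rw [mul_comm i a]
        omega
      · rw [Finset.mem_Ico]
        omega
    · right
      rw [if_pos (by omega), Finset.mem_Icc]
      omega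
  have hcard := (Finset.card_le_card hsub).trans (Finset.card_union_le _ _)
  have h1 : ((Finset.Icc 1 (2 * N / a)).biUnion
      (fun i => Finset.Ico (a * i - c) (a * i + s q))).card ≤ (2 * N / a) * (c + s q) := by
    refine (Finset.card_biUnion_le_card_mul _ _ (c + s q) ?_).trans ?_
    · intro i _
      rw [Nat.card_Ico]; omega
    · rw [Nat.card_Icc]; simp
  have h1' : (2 * N / a) * (c + s q) * 2 ^ (q + 1) ≤ N := by
    have h3 : (c + s q) * 2 ^ (q + 2) ≤ a := by
      rw [ha, aa, mul_comm]
      exact Nat.mul_le_mul_left _ (by omega)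
    have h4 : (2 * N / a) * ((c + s q) * 2 ^ (q + 2)) ≤ 2 * N :=
      (Nat.mul_le_mul_left _ h3).trans (Nat.div_mul_le_self _ _)
    have h5 : (2 * N / a) * ((c + s q) * 2 ^ (q + 2)) = 2 * ((2 * N / a) * (c + s q) * 2 ^ (q + 1)) := by
      ring
    omega
  have h2 : (if NN s q ≤ N + PP s q + c then
      Finset.Icc (NN s q - PP s q - c) (NN s q + LL s q) else ∅).card * 2 ^ (q + 1) ≤ N := by
    split_ifs with h
    · rw [Nat.card_Icc]
      have h3 := NN_ge s q
      have h4 : NN s q + LL s q + 1 - (NN s q - PP s q - c) = PP s q + c + LL s q + 1 := by omega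
      rw [h4]
      have h5 : NN s q = (PP s q + c + LL s q + 1) + (PP s q + c + LL s q + 1) * 2 ^ (q + 1) := by
        rw [NN]; ring
      omega
    · simp
  have h6 := Nat.mul_le_mul_right (2 ^ (q + 1)) (hcard.trans (Nat.add_le_add_right h1 _))
  rw [add_mul] at h6
  rw [pow_succ] at h6 h2 h1'
  nlinarith

lemma card_union (s : ℕ → ℕ) (r N : ℕ) :
    (((Finset.range (N + 1)).filter (fun n => ∃ q, r < q ∧ FF s q n)).card : ℝ)
      ≤ (N + 1) * (1 / 2) ^ r := by
  have hsub : (Finset.range (N + 1)).filter (fun n => ∃ q, r < q ∧ FF s q n) ⊆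
      (Finset.range N).biUnion
        (fun i => (Finset.range (N + 1)).filter (fun n => FF s (r + 1 + i) n)) := by
    intro n hn
    simp only [Finset.mem_filter, Finset.mem_biUnion] at hn ⊢
    obtain ⟨hnN, q, hq, hF⟩ := hn
    refine ⟨q - r - 1, ?_, hnN, ?_⟩
    · rw [Finset.mem_range]
      by_contra hlt
      have h1 := card_FF s q N
      have h2 : 0 < ((Finset.range (N + 1)).filter (fun n => FF s q n)).card :=
        Finset.card_pos.mpr ⟨n, by simp only [Finset.mem_filter]; exact ⟨hnN, hF⟩⟩
      have h3 : q < 2 ^ q := Nat.lt_two_pow_self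
      nlinarith [Nat.le_mul_of_pos_left (2 ^ q) h2, Nat.not_lt.mp hlt, Nat.sub_le (q - r) 1, Nat.sub_le q r]
    · have : r + 1 + (q - r - 1) = q := by omega
      rwa [this]
  have h1 : (((Finset.range (N + 1)).filter (fun n => ∃ q, r < q ∧ FF s q n)).card : ℝ) ≤
      ∑ i ∈ Finset.range N, ((N : ℝ) + 1) * ((1 / 2) ^ (r + 1) * (1 / 2) ^ i) := by
    refine (Nat.cast_le.mpr ((Finset.card_le_card hsub).trans Finset.card_biUnion_le)).trans ?_
    push_cast
    apply Finset.sum_le_sum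
    intro i _
    have h2 := card_FF s (r + 1 + i) N
    have h3 : (((Finset.range (N + 1)).filter (fun n => FF s (r + 1 + i) n)).card : ℝ) *
      2 ^ (r + 1 + i) ≤ N := by exact_mod_cast h2
    rw [← pow_add, one_div, inv_pow, ← div_eq_mul_inv, le_div_iff₀ (by positivity)]
    linarith
  refine h1.trans ?_
  rw [← Finset.mul_sum, ← Finset.mul_sum]
  have h4 : ∑ i ∈ Finset.range N, ((1 : ℝ) / 2) ^ i ≤ 2 := by
    rw [geom_sum_eq (by norm_num)]
    have : (0 : ℝ) ≤ (1 / 2) ^ N := by positivity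
    rw [div_le_iff_of_neg (by norm_num)]
    linarith
  have h5 : (0 : ℝ) < (1 / 2) ^ r := by positivity
  rw [pow_succ]
  have h6 : (1 / 2 : ℝ) ^ r * (1 / 2) * ∑ i ∈ Finset.range N, ((1 : ℝ) / 2) ^ i ≤ (1 / 2) ^ r := by
    nlinarith
  exact mul_le_mul_of_nonneg_left h6 (by positivity)

/-- a set on which `uu` eventually exceeds every bound has zero upper density -/
lemma upperDensity_le {s : ℕ → ℕ} (hs : Monotone s) (A : Set ℕ)
    (hA : ∀ t, ∃ n0, ∀ n ∈ A, n0 ≤ n → t < uu s n) : upperDensity A ≤ 0 := by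
  have key : ∀ r : ℕ, upperDensity A ≤ 2 * (1 / 2) ^ r := by
    intro r
    obtain ⟨n0, hn0⟩ := hA (Ht s r)
    have hpos : (0 : ℝ) < (1 / 2) ^ r := by positivity
    unfold upperDensity
    apply Filter.limsup_le_of_le
    · refine Filter.IsCoboundedUnder.of_frequently_ge (a := 0) ?_
      exact Filter.Frequently.of_forall (fun N => by positivity)
    · obtain ⟨N0, hN0⟩ := exists_nat_ge ((n0 : ℝ) / (1 / 2) ^ r)
      filter_upwards [Filter.eventually_ge_atTop N0] with N hN
      rw [div_le_iff₀ (by positivity)]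
      have hsub : (Finset.range (N + 1)).filter (fun n => n ∈ A) ⊆ Finset.range n0 ∪
          (Finset.range (N + 1)).filter (fun n => ∃ q, r < q ∧ FF s q n) := by
        intro n hn
        simp only [Finset.mem_filter, Finset.mem_union, Finset.mem_range] at hn ⊢
        by_cases h : n < n0
        · exact Or.inl h
        · exact Or.inr ⟨hn.1, uu_gt hs (hn0 n hn.2 (by omega))⟩
      have h1 := (Finset.card_le_card hsub).trans (Finset.card_union_le _ _)
      rw [Finset.card_range] at h1
      have h2 : (((Finset.range (N + 1)).filter (fun n => n ∈ A)).card : ℝ) ≤ n0 +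
        (((Finset.range (N + 1)).filter (fun n => ∃ q, r < q ∧ FF s q n)).card : ℝ) := by
        exact_mod_cast h1
      have h3 := card_union s r N
      rw [div_le_iff₀ hpos] at hN0
      have h4 : (N0 : ℝ) ≤ N := by exact_mod_cast hN
      nlinarith
  refine ge_of_tendsto' (x := Filter.atTop) (f := fun r : ℕ => 2 * (1 / 2 : ℝ) ^ r) ?_ key
  have := (tendsto_pow_atTop_nhds_zero_of_lt_one (r := (1 / 2 : ℝ)) (by norm_num) (by norm_num)).const_mul 2
  simpa using this

/-- representation of a position of the vector `x` -/
def Rep (s : ℕ → ℕ) (m : ℕ) (t : ℕ × ℕ × ℕ) : Prop :=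
  t.2.1 < t.1 ∧ t.2.2 < s (qq t.1) ∧ m = NN s t.1 + aa s (qq t.1) * t.2.1 + t.2.2

lemma qq_le (j : ℕ) : qq j ≤ j := Nat.unpair_left_le j

lemma Rep_bd {s : ℕ → ℕ} (hs : Monotone s) {m j i k : ℕ} (h : Rep s m (j, i, k)) :
    NN s j ≤ m ∧ m < NN s j + LL s j := by
  obtain ⟨h1, h2, h3⟩ := h
  simp only at h1 h2 h3
  have h4 : s (qq j) ≤ s j := hs (qq_le j)
  have h5 : aa s (qq j) * i ≤ aa s (qq j) * j := Nat.mul_le_mul_left _ h1.le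
  unfold LL
  omega

lemma Rep_unique {s : ℕ → ℕ} (hs : Monotone s) {m : ℕ} {t t' : ℕ × ℕ × ℕ}
    (h : Rep s m t) (h' : Rep s m t') : t = t' := by
  obtain ⟨j, i, k⟩ := t
  obtain ⟨j', i', k'⟩ := t'
  have b := Rep_bd hs h
  have b' := Rep_bd hs h'
  have hj : j = j' := by
    rcases lt_trichotomy j j' with hlt | heq | hlt
    · have := block_le s hlt
      have := NN_ge s j'
      omega
    · exact heq
    · have := block_le s hlt
      have := NN_ge s j
      omega
  subst hj
  obtain ⟨h1, h2, h3⟩ := h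
  obtain ⟨h1', h2', h3'⟩ := h'
  simp only at h1 h2 h3 h1' h2' h3'
  have ha := aa_ge s (qq j)
  have hi : i = i' := by
    rcases lt_trichotomy i i' with hlt | heq | hlt
    · have := Nat.mul_le_mul_left (aa s (qq j)) (Nat.succ_le_of_lt hlt)
      rw [Nat.succ_eq_add_one, mul_add] at this
      omega
    · exact heq
    · have := Nat.mul_le_mul_left (aa s (qq j)) (Nat.succ_le_of_lt hlt)
      rw [Nat.succ_eq_add_one, mul_add] at this
      omega
  subst hi
  have : k = k' := by omega
  rw [this]

/-- positions of the blocks have large `uu` -/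
lemma uu_Rep {s : ℕ → ℕ} (hs : Monotone s) {m j i k : ℕ} (h : Rep s m (j, i, k)) :
    Ht s j ≤ uu s m := by
  have := Rep_bd hs h
  exact uu_EE (Or.inr ⟨by omega, by omega⟩)

lemma uu_shift {s : ℕ → ℕ} (hs : Monotone s) {j i l j' i' k' : ℕ} (hi : i < j)
    (hl : s (qq j) ≤ l) (h : Rep s (NN s j + aa s (qq j) * i + l) (j', i', k')) :
    qq j + 2 * s (qq j') ≤ uu s l := by
  have b := Rep_bd hs h
  have hq := qq_le j
  have hij : aa s (qq j) * i ≤ aa s (qq j) * j := Nat.mul_le_mul_left _ hi.le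
  rcases lt_trichotomy j' j with hlt | heq | hlt
  · exfalso
    have := block_le s hlt
    have := NN_ge s j
    omega
  · subst heq
    obtain ⟨h1, h2, h3⟩ := h
    simp only at h1 h2 h3
    have hii : i < i' := by
      by_contra hc
      have : aa s (qq j') * i' ≤ aa s (qq j') * i := Nat.mul_le_mul_left _ (by omega)
      omega
    obtain ⟨d, rfl⟩ := Nat.exists_eq_add_of_lt hii
    have : Ht s (qq j') ≤ uu s l := by
      refine uu_EE (Or.inl ⟨d + 1, k', by omega, h2, ?_⟩)
      have e : aa s (qq j') * (i + d + 1) = aa s (qq j') * i + aa s (qq j') * (d + 1) := by ring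
      omega
    unfold Ht at this
    omega
  · have h4 := block_le s hlt
    have h5 : s (qq j') ≤ s j' := hs (qq_le j')
    have : Ht s j' ≤ uu s l := by
      refine uu_EE (Or.inr ⟨?_, ?_⟩)
      · have : LL s j = aa s (qq j) * j + s j := rfl
        omega
      · omega
    unfold Ht at this
    omega

section
variable {𝕜 : Type*} [RCLike 𝕜]

noncomputable def vv (𝕜 : Type*) [RCLike 𝕜] (s : ℕ → ℕ) (n : ℕ) : 𝕜 := 2 ^ uu s n

lemma vv_ne (s : ℕ → ℕ) (n : ℕ) : vv 𝕜 s n ≠ 0 := pow_ne_zero _ two_ne_zero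

lemma norm_vv (s : ℕ → ℕ) (n : ℕ) : ‖vv 𝕜 s n‖ = 2 ^ uu s n := by
  simp [vv]

noncomputable def ww (𝕜 : Type*) [RCLike 𝕜] (s : ℕ → ℕ) (n : ℕ) : 𝕜 := vv 𝕜 s n / vv 𝕜 s (n - 1)

lemma norm_ww (s : ℕ → ℕ) (n : ℕ) : ‖ww 𝕜 s n‖ ≤ 2 := by
  unfold ww
  rw [norm_div, norm_vv, norm_vv, div_le_iff₀ (by positivity), ← pow_succ']
  apply pow_le_pow_right₀ (by norm_num)
  rcases n with _ | n
  · simp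
  · exact uu_succ s n

lemma norm_le_of {f : C₀(ℕ, 𝕜)} {M : ℝ} (hM : 0 ≤ M) (h : ∀ n, ‖f n‖ ≤ M) : ‖f‖ ≤ M := by
  rw [← ZeroAtInftyContinuousMap.norm_toBCF_eq_norm]
  exact (BoundedContinuousFunction.norm_le hM).mpr h

lemma le_norm (f : C₀(ℕ, 𝕜)) (n : ℕ) : ‖f n‖ ≤ ‖f‖ := by
  rw [← ZeroAtInftyContinuousMap.norm_toBCF_eq_norm]
  exact f.toBCF.norm_coe_le_norm n

lemma tendsto_c0 (f : C₀(ℕ, 𝕜)) : Tendsto f atTop (𝓝 0) := by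
  have := f.zero_at_infty'
  rwa [cocompact_eq_atTop] at this

noncomputable def mk0 (f : ℕ → 𝕜) (hf : Tendsto f atTop (𝓝 0)) : C₀(ℕ, 𝕜) where
  toFun := f
  continuous_toFun := continuous_of_discreteTopology
  zero_at_infty' := by rw [cocompact_eq_atTop]; exact hf

lemma mk0_apply (f : ℕ → 𝕜) (hf : Tendsto f atTop (𝓝 0)) (n : ℕ) : mk0 f hf n = f n := rfl

lemma exists_B (w : ℕ → 𝕜) (hw : ∀ n, ‖w n‖ ≤ 2) :
    ∃ B : C₀(ℕ, 𝕜) →L[𝕜] C₀(ℕ, 𝕜), ∀ x n, B x n = w (n + 1) * x (n + 1) := by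
  have hT : ∀ x : C₀(ℕ, 𝕜), Tendsto (fun n => w (n + 1) * x (n + 1)) atTop (𝓝 0) := by
    intro x
    have h1 : Tendsto (fun n => 2 * ‖x (n + 1)‖) atTop (𝓝 0) := by
      have := (((tendsto_add_atTop_iff_nat 1).mpr (tendsto_c0 x)).norm).const_mul 2
      simpa using this
    refine squeeze_zero_norm (fun n => ?_) h1
    rw [norm_mul]
    exact mul_le_mul_of_nonneg_right (hw _) (norm_nonneg _)
  let L : C₀(ℕ, 𝕜) →ₗ[𝕜] C₀(ℕ, 𝕜) :=
    { toFun := fun x => mk0 _ (hT x)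
      map_add' := by
        intro x y
        ext n
        simp only [mk0_apply, ZeroAtInftyContinuousMap.add_apply]
        ring
      map_smul' := by
        intro c x
        ext n
        simp only [mk0_apply, ZeroAtInftyContinuousMap.smul_apply, smul_eq_mul, RingHom.id_apply]
        ring }
  refine ⟨L.mkContinuous 2 ?_, fun x n => rfl⟩
  intro x
  apply norm_le_of (by positivity)
  intro n
  change ‖w (n + 1) * x (n + 1)‖ ≤ _
  rw [norm_mul]
  exact mul_le_mul (hw _) (le_norm _ _) (norm_nonneg _) (by norm_num)

lemma iterate_B {s : ℕ → ℕ} {B : C₀(ℕ, 𝕜) →L[𝕜] C₀(ℕ, 𝕜)}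
    (hB : ∀ x n, B x n = ww 𝕜 s (n + 1) * x (n + 1)) (n : ℕ) :
    ∀ x k, ((⇑B)^[n] x) k = vv 𝕜 s (n + k) / vv 𝕜 s k * x (n + k) := by
  induction n with
  | zero => intro x k; simp [vv_ne]
  | succ n ih =>
    intro x k
    rw [Function.iterate_succ_apply, ih, hB]
    have h1 := vv_ne (𝕜 := 𝕜) s (n + k)
    have h2 := vv_ne (𝕜 := 𝕜) s k
    have e : n + 1 + k = n + k + 1 := by omega
    rw [e, ww, Nat.add_sub_cancel]
    field_simp

/-- dense family of finitely supported targets -/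
lemma exists_targets (𝕜 : Type*) [RCLike 𝕜] : ∃ (y : ℕ → ℕ → 𝕜) (s : ℕ → ℕ), Monotone s ∧
    (∀ q k, s q ≤ k → y q k = 0) ∧ (∀ q k, ‖y q k‖ ≤ 2 ^ s q) ∧
    (∀ (z : C₀(ℕ, 𝕜)) (ε : ℝ), 0 < ε → ∃ q, (1 / 2 : ℝ) ^ q < ε ∧ ∀ k, ‖y q k - z k‖ < ε) := by
  obtain ⟨e, he⟩ := exists_surjective_nat (Σ n : ℕ, (Fin n → ℕ))
  let y : ℕ → ℕ → 𝕜 := fun q k =>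
    if h : k < (e (qq q)).1 then TopologicalSpace.denseSeq 𝕜 ((e (qq q)).2 ⟨k, h⟩) else 0
  have hb : ∀ q, ∃ t : ℕ, (∀ k, t ≤ k → y q k = 0) ∧ (∀ k, ‖y q k‖ ≤ 2 ^ t) := by
    intro q
    obtain ⟨M, hM⟩ := exists_nat_ge (∑ k ∈ Finset.range (e (qq q)).1, ‖y q k‖)
    have hz : ∀ k, (e (qq q)).1 ≤ k → y q k = 0 := by
      intro k hk
      exact dif_neg (by omega)
    refine ⟨(e (qq q)).1 + M, fun k hk => hz k (by omega), fun k => ?_⟩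
    by_cases hk : k < (e (qq q)).1
    · have h1 := Finset.single_le_sum (f := fun k => ‖y q k‖) (fun i _ => norm_nonneg _)
        (Finset.mem_range.mpr hk)
      have h2 : (M : ℝ) ≤ 2 ^ M := by exact_mod_cast Nat.lt_two_pow_self.le
      have h3 : (2 : ℝ) ^ M ≤ 2 ^ ((e (qq q)).1 + M) :=
        pow_le_pow_right₀ (by norm_num) (by omega)
      linarith
    · rw [hz k (by omega), norm_zero]; positivity
  choose t ht1 ht2 using hb
  have hts : ∀ q, t q ≤ ∑ i ∈ Finset.range (q + 1), t i := fun q =>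
    Finset.single_le_sum (f := t) (fun _ _ => Nat.zero_le _) (Finset.mem_range.mpr (by omega))
  refine ⟨y, fun q => ∑ i ∈ Finset.range (q + 1), t i, ?_, ?_, ?_, ?_⟩
  · apply monotone_nat_of_le_succ
    intro q
    rw [Finset.sum_range_succ _ (q + 1)]
    omega
  · intro q k hk
    exact ht1 q k ((hts q).trans hk)
  · intro q k
    exact (ht2 q k).trans (pow_le_pow_right₀ (by norm_num) (hts q))
  · intro z ε hε
    obtain ⟨b, hb⟩ := exists_pow_lt_of_lt_one hε (by norm_num : (1 / 2 : ℝ) < 1)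
    obtain ⟨n, hn⟩ := (Metric.tendsto_atTop.mp (tendsto_c0 z)) ε hε
    have hd : ∀ k : ℕ, ∃ i, ‖TopologicalSpace.denseSeq 𝕜 i - z k‖ < ε := by
      intro k
      obtain ⟨i, hi⟩ := (TopologicalSpace.denseRange_denseSeq 𝕜).exists_dist_lt (z k) hε
      exact ⟨i, by rwa [dist_comm, dist_eq_norm] at hi⟩
    choose f hf using hd
    obtain ⟨a, ha⟩ := he ⟨n, fun k => f k⟩
    refine ⟨Nat.pair a b, ?_, ?_⟩
    · refine lt_of_le_of_lt ?_ hb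
      exact pow_le_pow_of_le_one (by norm_num) (by norm_num) (Nat.right_le_pair a b)
    · intro k
      have hq : qq (Nat.pair a b) = a := by simp [qq]
      simp only [y]
      rw [hq, ha]
      split_ifs with h
      · exact hf k
      · have := hn k (by simpa using h)
        rw [dist_zero_right] at this
        simpa using this

lemma upperBanach_pos (A : Set ℕ) (a : ℕ) (ha : 0 < a)
    (h : ∀ N, ∃ m, ∀ i, i ≤ N → m + a * i ∈ A) : 0 < upperBanachDensity A := by
  have hpos : (0 : ℝ) < 1 / a := by positivity
  refine lt_of_lt_of_le hpos ?_
  unfold upperBanachDensity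
  apply le_ciInf
  intro N
  obtain ⟨m, hm⟩ := h N
  have hbd : BddAbove (Set.range fun m : ℕ =>
      (((Finset.Icc m (m + N)).filter (fun n => n ∈ A)).card : ℝ) / ((N : ℝ) + 1)) := by
    refine ⟨1, ?_⟩
    rintro _ ⟨m, rfl⟩
    simp only
    rw [div_le_one (by positivity)]
    have := Finset.card_filter_le (Finset.Icc m (m + N)) (fun n => n ∈ A)
    rw [Nat.card_Icc] at this
    have h2 : ((Finset.Icc m (m + N)).filter (fun n => n ∈ A)).card ≤ N + 1 := by omega
    exact_mod_cast h2
  refine le_trans ?_ (le_ciSup hbd m)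
  have hc : N / a + 1 ≤ ((Finset.Icc m (m + N)).filter (fun n => n ∈ A)).card := by
    have := Finset.card_le_card_of_injOn (s := Finset.range (N / a + 1))
      (t := (Finset.Icc m (m + N)).filter (fun n => n ∈ A)) (fun i => m + a * i) ?_ ?_
    · simpa using this
    · intro i hi
      simp only [Finset.coe_range, Set.mem_Iio] at hi
      have h1 : i ≤ N / a := by omega
      have h2 : i ≤ N := h1.trans (Nat.div_le_self _ _)
      have h3 : a * i ≤ N := (Nat.mul_le_mul_left a h1).trans (Nat.mul_div_le N a)
      simp only [Finset.coe_filter, Finset.mem_Icc, Set.mem_ofPred_eq]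
      exact ⟨⟨by omega, by omega⟩, hm i h2⟩
    · intro i _ i' _ hii
      simp only at hii
      exact Nat.eq_of_mul_eq_mul_left ha (by omega)
  have h4 : N + 1 ≤ a * (N / a + 1) := by
    have := Nat.lt_mul_div_succ N ha
    omega
  have h5 : N + 1 ≤ a * ((Finset.Icc m (m + N)).filter (fun n => n ∈ A)).card :=
    h4.trans (Nat.mul_le_mul_left _ hc)
  rw [div_le_div_iff₀ (by positivity) (by positivity)]
  have h6 : ((N : ℝ) + 1) ≤ a * ((Finset.Icc m (m + N)).filter (fun n => n ∈ A)).card := by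
    exact_mod_cast h5
  linarith

open Classical in
noncomputable def xx (y : ℕ → ℕ → 𝕜) (s : ℕ → ℕ) (m : ℕ) : 𝕜 :=
  if h : ∃ t, Rep s m t then
    vv 𝕜 s h.choose.2.2 / vv 𝕜 s m * y (qq h.choose.1) h.choose.2.2 else 0

lemma xx_Rep {y : ℕ → ℕ → 𝕜} {s : ℕ → ℕ} (hs : Monotone s) {m : ℕ} {t : ℕ × ℕ × ℕ}
    (h : Rep s m t) : xx y s m = vv 𝕜 s t.2.2 / vv 𝕜 s m * y (qq t.1) t.2.2 := by
  have hex : ∃ t, Rep s m t := ⟨t, h⟩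
  unfold xx
  rw [dif_pos hex, Rep_unique hs hex.choose_spec h]

lemma xx_not {y : ℕ → ℕ → 𝕜} {s : ℕ → ℕ} {m : ℕ}
    (h : ¬ ∃ t, Rep s m t) : xx y s m = 0 := dif_neg h

/-- general size estimate -/
lemma size_est {y : ℕ → ℕ → 𝕜} {s : ℕ → ℕ} (hy : ∀ q k, ‖y q k‖ ≤ 2 ^ s q) {q k l p : ℕ}
    (hk : k < s q) (hl : p + 2 * s q ≤ uu s l) :
    ‖vv 𝕜 s k / vv 𝕜 s l * y q k‖ ≤ (1 / 2) ^ p := by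
  rw [norm_mul, norm_div, norm_vv, norm_vv, div_mul_eq_mul_div, div_le_iff₀ (by positivity)]
  have h1 : (2 : ℝ) ^ uu s k ≤ 2 ^ s q :=
    pow_le_pow_right₀ (by norm_num) ((uu_le s k).trans hk.le)
  have h2 : (2 : ℝ) ^ (p + 2 * s q) ≤ 2 ^ uu s l := pow_le_pow_right₀ (by norm_num) hl
  calc (2 : ℝ) ^ uu s k * ‖y q k‖ ≤ 2 ^ s q * 2 ^ s q :=
        mul_le_mul h1 (hy q k) (norm_nonneg _) (by positivity)
    _ = (1 / 2) ^ p * 2 ^ (p + 2 * s q) := by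
        have e : ((1 : ℝ) / 2) ^ p * 2 ^ p = 1 := by rw [← mul_pow]; norm_num
        rw [pow_add, ← mul_assoc, e, one_mul, two_mul, pow_add]
    _ ≤ _ := mul_le_mul_of_nonneg_left h2 (by positivity)

lemma xx_tendsto {y : ℕ → ℕ → 𝕜} {s : ℕ → ℕ} (hs : Monotone s) (hy : ∀ q k, ‖y q k‖ ≤ 2 ^ s q) :
    Tendsto (xx y s) atTop (𝓝 0) := by
  rw [Metric.tendsto_atTop]
  intro ε hε
  obtain ⟨b, hb⟩ := exists_pow_lt_of_lt_one hε (by norm_num : (1 / 2 : ℝ) < 1)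
  refine ⟨NN s b + LL s b, fun m hm => ?_⟩
  rw [dist_zero_right]
  by_cases h : ∃ t, Rep s m t
  · obtain ⟨⟨j, i, k⟩, ht⟩ := h
    have hbj : b ≤ j := by
      by_contra hc
      have h1 := Rep_bd hs ht
      have h2 := block_le s (show j < b by omega)
      have h3 := NN_ge s b
      omega
    rw [xx_Rep hs ht]
    refine lt_of_le_of_lt (size_est hy ht.2.1 (p := b) ?_) hb
    have h4 := uu_Rep hs ht
    have h5 : s (qq j) ≤ s j := hs (qq_le j)
    unfold Ht at h4
    simp only
    omega
  · rw [xx_not h, norm_zero]; exact hε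

end
end RHC

/-- There exists a bounded sequence `w` of nonzero scalars such that the weighted backward
shift `B_w` on `c₀` (the continuous linear operator `Bw` with `(Bw x) n = w (n+1) * x (n+1)`)
is reiteratively hypercyclic but not upper frequently hypercyclic. -/
theorem exists_weightedShift_reiterativelyHC_not_upperFrequentlyHC {𝕜 : Type*} [RCLike 𝕜] :
    ∃ (w : ℕ → 𝕜) (Bw : C₀(ℕ, 𝕜) →L[𝕜] C₀(ℕ, 𝕜)),
      (∀ n, w n ≠ 0) ∧ (∃ C : ℝ, ∀ n, ‖w n‖ ≤ C) ∧
      (∀ (x : C₀(ℕ, 𝕜)) (n : ℕ), Bw x n = w (n + 1) * x (n + 1)) ∧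
      (∃ x : C₀(ℕ, 𝕜), ∀ U : Set C₀(ℕ, 𝕜), IsOpen U → U.Nonempty →
        0 < upperBanachDensity {n : ℕ | (⇑Bw)^[n] x ∈ U}) ∧
      ¬ (∃ x : C₀(ℕ, 𝕜), ∀ U : Set C₀(ℕ, 𝕜), IsOpen U → U.Nonempty →
        0 < upperDensity {n : ℕ | (⇑Bw)^[n] x ∈ U}) := by
  obtain ⟨y, s, hs, hy0, hy, hyd⟩ := RHC.exists_targets 𝕜
  obtain ⟨B, hB⟩ := RHC.exists_B (RHC.ww 𝕜 s) (RHC.norm_ww s)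
  refine ⟨RHC.ww 𝕜 s, B, fun n => div_ne_zero (RHC.vv_ne s _) (RHC.vv_ne s _),
    ⟨2, RHC.norm_ww s⟩, hB, ?_, ?_⟩
  · refine ⟨RHC.mk0 (RHC.xx y s) (RHC.xx_tendsto hs hy), ?_⟩
    rintro U hU ⟨z, hz⟩
    obtain ⟨δ, hδ, hball⟩ := Metric.isOpen_iff.mp hU z hz
    obtain ⟨q, hq, hqz⟩ := hyd z (δ / 4) (by positivity)
    apply RHC.upperBanach_pos _ (RHC.aa s q) (by have := RHC.aa_ge s q; omega)
    intro N
    set j := Nat.pair q (N + 1) with hj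
    have hqj : RHC.qq j = q := by simp [RHC.qq, hj]
    have hNj : N + 1 ≤ j := Nat.right_le_pair q (N + 1)
    refine ⟨RHC.NN s j, fun i hi => ?_⟩
    have hij : i < j := by omega
    apply hball
    rw [Metric.mem_ball, dist_eq_norm]
    refine lt_of_le_of_lt (RHC.norm_le_of (M := δ / 2) (by positivity) ?_) (by linarith)
    intro l
    rw [ZeroAtInftyContinuousMap.sub_apply, RHC.iterate_B hB, RHC.mk0_apply]
    set n := RHC.NN s j + RHC.aa s q * i with hn
    have hv1 := RHC.vv_ne (𝕜 := 𝕜) s (n + l)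
    have hv2 := RHC.vv_ne (𝕜 := 𝕜) s l
    have key : ‖RHC.vv 𝕜 s (n + l) / RHC.vv 𝕜 s l * RHC.xx y s (n + l) - y q l‖ ≤ (1 / 2) ^ q := by
      by_cases hl : l < s q
      · have hr : RHC.Rep s (n + l) (j, i, l) := ⟨hij, by rw [hqj]; exact hl, by rw [hqj]⟩
        rw [RHC.xx_Rep hs hr, hqj]
        have e : RHC.vv 𝕜 s (n + l) / RHC.vv 𝕜 s l *
            (RHC.vv 𝕜 s l / RHC.vv 𝕜 s (n + l) * y q l) - y q l = 0 := by
          field_simp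
          ring
        rw [e, norm_zero]
        positivity
      · rw [hy0 q l (by omega), sub_zero]
        by_cases hex : ∃ t, RHC.Rep s (n + l) t
        · obtain ⟨⟨j', i', k'⟩, ht⟩ := hex
          rw [RHC.xx_Rep hs ht]
          have e : RHC.vv 𝕜 s (n + l) / RHC.vv 𝕜 s l *
            (RHC.vv 𝕜 s k' / RHC.vv 𝕜 s (n + l) * y (RHC.qq j') k') =
              RHC.vv 𝕜 s k' / RHC.vv 𝕜 s l * y (RHC.qq j') k' := by
            field_simp
          simp only
          rw [e]
          refine RHC.size_est hy ht.2.1 ?_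
          have h1 := RHC.uu_shift hs hij (l := l) (by rw [hqj]; omega)
            (j' := j') (i' := i') (k' := k') (by rw [hqj]; exact ht)
          rw [hqj] at h1
          exact h1
        · rw [RHC.xx_not hex, mul_zero, norm_zero]
          positivity
    have h2 := hqz l
    have h3 := norm_sub_le_norm_sub_add_norm_sub
      (RHC.vv 𝕜 s (n + l) / RHC.vv 𝕜 s l * RHC.xx y s (n + l)) (y q l) (z l)
    linarith
  · rintro ⟨x, hx⟩
    have hcont : Continuous (fun z : C₀(ℕ, 𝕜) => z 0) := by
      refine (LipschitzWith.of_dist_le_mul (K := 1) ?_).continuous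
      intro a b
      rw [dist_eq_norm, dist_eq_norm, ← ZeroAtInftyContinuousMap.sub_apply]
      simpa using RHC.le_norm (a - b) 0
    have hU : IsOpen {z : C₀(ℕ, 𝕜) | 1 < ‖z 0‖} := isOpen_lt continuous_const hcont.norm
    have hne : {z : C₀(ℕ, 𝕜) | 1 < ‖z 0‖}.Nonempty := by
      refine ⟨RHC.mk0 (fun n => if n = 0 then 2 else 0) ?_, ?_⟩
      · refine tendsto_const_nhds.congr' ?_
        filter_upwards [eventually_gt_atTop 0] with n hn
        rw [if_neg (by omega)]
      · simp [RHC.mk0_apply]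
    have h1 := hx _ hU hne
    refine absurd h1 (not_lt.mpr (RHC.upperDensity_le hs _ ?_))
    intro t
    obtain ⟨n0, hn0⟩ := (Metric.tendsto_atTop.mp (RHC.tendsto_c0 x)) ((1 / 2) ^ t) (by positivity)
    refine ⟨n0, fun n hn hnn => ?_⟩
    have h2 := hn0 n hnn
    rw [dist_zero_right] at h2
    simp only [Set.mem_ofPred_eq] at hn
    have h00 : RHC.uu s 0 = 0 := Nat.le_zero.mp (RHC.uu_le s 0)
    rw [RHC.iterate_B hB, norm_mul, norm_div, RHC.norm_vv, RHC.norm_vv, h00, add_zero, pow_zero,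
      div_one] at hn
    by_contra hc
    have h3 : (2 : ℝ) ^ RHC.uu s n ≤ 2 ^ t := pow_le_pow_right₀ (by norm_num) (by omega)
    have h4 : (2 : ℝ) ^ RHC.uu s n * ‖x n‖ ≤ 2 ^ t * (1 / 2) ^ t :=
      mul_le_mul h3 h2.le (norm_nonneg _) (by positivity)
    rw [← mul_pow] at h4
    norm_num at h4
    linarith
end

section
/- There exists a bounded sequence w = (w_n)_{n≥1} of nonzero scalars such that the weighted backward shift B_w on c₀ is upper frequently hypercyclic but not frequently hypercyclic. -/
open Filter Topology
open scoped Classical ZeroAtInfty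

/-- One-sided Lipschitz envelope of a height relation. -/
lemma exists_envelope (P : ℕ → ℕ → Prop) (hP : ∀ c v, P c v → v ≤ c) :
    ∃ a : ℕ → ℕ, a 0 = 0 ∧ (∀ n, a (n + 1) ≤ a n + 1) ∧ (∀ n v, P n v → v ≤ a n) ∧
      (∀ n, 0 < a n → ∃ c v, n ≤ c ∧ P c v ∧ a n + c ≤ v + n) := by
  let R : ℕ → ℕ → Prop := fun n k => k = 0 ∨ ∃ c v, n ≤ c ∧ P c v ∧ k + c ≤ v + n
  have spec : ∀ n, R n (Nat.findGreatest (R n) n) := fun n =>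
    Nat.findGreatest_spec (P := R n) (Nat.zero_le n) (Or.inl rfl)
  refine ⟨fun n => Nat.findGreatest (R n) n, by simp, ?_, ?_, ?_⟩
  · intro n
    rcases spec (n + 1) with h | ⟨c, v, h1, h2, h3⟩
    · simp only [h]; omega
    · have hv := hP c v h2
      have : Nat.findGreatest (R (n + 1)) (n + 1) - 1 ≤ Nat.findGreatest (R n) n := by
        apply Nat.le_findGreatest
        · omega
        · by_cases h0 : Nat.findGreatest (R (n + 1)) (n + 1) = 0
          · left; omega
          · right; exact ⟨c, v, by omega, h2, by omega⟩
      simp only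
      omega
  · intro n v h
    exact Nat.le_findGreatest (hP n v h) (Or.inr ⟨n, v, le_rfl, h, le_rfl⟩)
  · intro n hn
    rcases spec n with h | h
    · simp only [h] at hn; omega
    · exact h

lemma c0_norm_le {𝕜 : Type*} [RCLike 𝕜] (f : C₀(ℕ, 𝕜)) (C : ℝ) (hC : 0 ≤ C)
    (h : ∀ n, ‖f n‖ ≤ C) : ‖f‖ ≤ C := by
  rw [← ZeroAtInftyContinuousMap.norm_toBCF_eq_norm]
  exact (BoundedContinuousFunction.norm_le hC).2 h

lemma c0_apply_le {𝕜 : Type*} [RCLike 𝕜] (f : C₀(ℕ, 𝕜)) (n : ℕ) : ‖f n‖ ≤ ‖f‖ := by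
  rw [← ZeroAtInftyContinuousMap.norm_toBCF_eq_norm]
  exact f.toBCF.norm_coe_le_norm n

lemma c0_tendsto {𝕜 : Type*} [RCLike 𝕜] (f : C₀(ℕ, 𝕜)) : Tendsto (fun n => f n) atTop (𝓝 0) := by
  have := f.zero_at_infty'
  rw [cocompact_eq_cofinite, Nat.cofinite_eq_atTop] at this
  exact this

/-- Build an element of `c₀` from a null sequence. -/
noncomputable def c0mk {𝕜 : Type*} [RCLike 𝕜] (f : ℕ → 𝕜) (h : Tendsto f atTop (𝓝 0)) :
    C₀(ℕ, 𝕜) where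
  toFun := f
  continuous_toFun := continuous_of_discreteTopology
  zero_at_infty' := by
    rw [cocompact_eq_cofinite, Nat.cofinite_eq_atTop]; exact h

@[simp] lemma c0mk_apply {𝕜 : Type*} [RCLike 𝕜] (f : ℕ → 𝕜) (h : Tendsto f atTop (𝓝 0)) (n : ℕ) :
    c0mk f h n = f n := rfl

/-- A dense sequence of finitely supported vectors. -/
lemma exists_dense (𝕜 : Type*) [RCLike 𝕜] :
    ∃ z : ℕ → C₀(ℕ, 𝕜), (∀ i, ∃ s, ∀ k, s < k → z i k = 0) ∧ DenseRange z := by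
  let g : List ℕ → ℕ → 𝕜 := fun l k => if k < l.length then TopologicalSpace.denseSeq 𝕜 (l.getD k 0) else 0
  have hg : ∀ l, Tendsto (g l) atTop (𝓝 0) := by
    intro l
    apply tendsto_const_nhds.congr'
    filter_upwards [eventually_ge_atTop l.length] with k hk
    simp [g, not_lt.2 hk]
  let z0 : List ℕ → C₀(ℕ, 𝕜) := fun l => c0mk (g l) (hg l)
  refine ⟨fun i => z0 (Denumerable.ofNat (List ℕ) i), ?_, ?_⟩
  · intro i
    refine ⟨(Denumerable.ofNat (List ℕ) i).length, fun k hk => ?_⟩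
    simp [z0, g, hk.le]
  · intro f
    rw [Metric.mem_closure_iff]
    intro ε hε
    have h1 := (Metric.tendsto_atTop.1 (c0_tendsto f)) (ε / 2) (by positivity)
    obtain ⟨N, hN⟩ := h1
    have h2 : ∀ k, ∃ d, dist (f k) (TopologicalSpace.denseSeq 𝕜 d) < ε / 2 := fun k =>
      (TopologicalSpace.denseRange_denseSeq 𝕜).exists_dist_lt (f k) (by positivity)
    choose d hd using h2
    let l := (List.range N).map d
    refine ⟨z0 l, ⟨Encodable.encode l, by simp⟩, ?_⟩
    rw [dist_eq_norm]
    refine lt_of_le_of_lt (c0_norm_le _ (ε / 2) (by positivity) ?_) (half_lt_self hε)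
    intro n
    by_cases hn : n < N
    · have : z0 l n = TopologicalSpace.denseSeq 𝕜 (d n) := by
        simp [z0, g, l, hn]
      rw [ZeroAtInftyContinuousMap.sub_apply, this, ← dist_eq_norm]
      exact (hd n).le
    · have : z0 l n = 0 := by
        simp [z0, g, l, not_lt.1 hn]
      rw [ZeroAtInftyContinuousMap.sub_apply, this, ← dist_eq_norm]
      exact (hN n (not_lt.1 hn)).le

/-- The sequence of targets, with explicit support and norm bounds. -/
lemma exists_targets (𝕜 : Type*) [RCLike 𝕜] :
    ∃ y : ℕ → C₀(ℕ, 𝕜), (∀ p k, p < k → y p k = 0) ∧ (∀ p, ‖y p‖ ≤ 2 ^ p) ∧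
      ∀ U : Set C₀(ℕ, 𝕜), IsOpen U → U.Nonempty →
        ∃ p, ∀ v : C₀(ℕ, 𝕜), ‖v - y p‖ ≤ (1 / 2) ^ p → v ∈ U := by
  obtain ⟨z, hz, hd⟩ := exists_dense 𝕜
  let Q : ℕ → Prop := fun p =>
    (∀ k, p < k → z (Nat.unpair p).1 k = 0) ∧ ‖z (Nat.unpair p).1‖ ≤ 2 ^ p
  refine ⟨fun p => if Q p then z (Nat.unpair p).1 else 0, ?_, ?_, ?_⟩
  · intro p k hk
    by_cases h : Q p
    · simp [h, h.1 k hk]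
    · simp [h]
  · intro p
    by_cases h : Q p
    · simp [h, h.2]
    · simp [h]
  · intro U hU hne
    obtain ⟨i, hi⟩ := hd.exists_mem_open hU hne
    obtain ⟨r, hr, hb⟩ := Metric.isOpen_iff.1 hU _ hi
    obtain ⟨s, hs⟩ := hz i
    obtain ⟨k1, hk1⟩ := pow_unbounded_of_one_lt ‖z i‖ (one_lt_two)
    obtain ⟨k2, hk2⟩ := exists_pow_lt_of_lt_one hr (by norm_num : (1 / 2 : ℝ) < 1)
    let p := Nat.pair i (s + k1 + k2)
    have hp : s + k1 + k2 ≤ p := Nat.right_le_pair _ _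
    have hu : (Nat.unpair p).1 = i := by simp [p]
    have hQ : Q p := by
      refine ⟨fun k hk => ?_, ?_⟩
      · rw [hu]; exact hs k (by omega)
      · rw [hu]; exact hk1.le.trans (pow_le_pow_right₀ (by norm_num) (by omega))
    refine ⟨p, fun v hv => hb ?_⟩
    simp only [hQ, if_true, hu] at hv
    rw [Metric.mem_ball, dist_eq_norm]
    refine lt_of_le_of_lt (hv.trans ?_) hk2
    exact pow_le_pow_of_le_one (by norm_num) (by norm_num) (by omega)

lemma T_facts (j : ℕ) : 8 * j + 8 ≤ 8 ^ ((j + 1) ^ 2) ∧ ∀ i, i < j →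
    64 * 8 ^ i * 8 ^ ((i + 1) ^ 2) ≤ 8 ^ ((j + 1) ^ 2) := by
  constructor
  · have h1 : j + 1 ≤ (j + 1) ^ 2 := by nlinarith
    have h2 : 8 ^ (j + 1) ≤ 8 ^ ((j + 1) ^ 2) := Nat.pow_le_pow_right (by norm_num) h1
    have h3 : j < 8 ^ j := Nat.lt_pow_self (by norm_num)
    rw [pow_succ] at h2
    omega
  · intro i hi
    have : (i + 2) + (i + 1) ^ 2 ≤ (j + 1) ^ 2 := by nlinarith
    calc 64 * 8 ^ i * 8 ^ ((i + 1) ^ 2) = 8 ^ ((i + 2) + (i + 1) ^ 2) := by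
          rw [pow_add, pow_add]; ring
      _ ≤ _ := Nat.pow_le_pow_right (by norm_num) this

/-- The count for a single period. -/
lemma count_single (p N : ℕ) (A : Finset ℕ)
    (hA : ∀ n ∈ A, n < N ∧ ∃ c, 8 ^ (p + 1) ≤ c ∧ c % 8 ^ (p + 1) ≤ p ∧ n ≤ c ∧ c < n + 3 * p) :
    (A.card : ℝ) ≤ N * (1 / 2) ^ p := by
  obtain ⟨M, hM⟩ : ∃ M, M = 8 ^ (p + 1) := ⟨_, rfl⟩
  have hMp : 2 * (4 * p + 1) * 2 ^ p ≤ M := by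
    have h3 : p < 2 ^ p := Nat.lt_pow_self (by norm_num)
    have : M = 8 * (2 ^ p * 2 ^ p) * 2 ^ p := by
      rw [hM, pow_succ, show (8 : ℕ) = 2 * 2 * 2 by norm_num, mul_pow, mul_pow]; ring
    rw [this]
    refine Nat.mul_le_mul_right _ ?_
    nlinarith
  have h2p : 1 ≤ 2 ^ p := Nat.one_le_two_pow
  have hMp2 : 8 * p + 2 ≤ M := by nlinarith
  rw [← hM] at hA
  have hcard : A.card ≤ (N + 3 * p) / M * (4 * p + 1) := by
    have := Finset.card_le_card_of_injOn (s := A)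
      (t := Finset.Icc 1 ((N + 3 * p) / M) ×ˢ Finset.range (4 * p + 1))
      (fun n => ((n + 3 * p) / M, (n + 3 * p) % M)) ?_ ?_
    · simpa using this
    · intro n hn
      obtain ⟨h0, c, h1, h2, h3, h4⟩ := hA n hn
      have hc := Nat.div_add_mod c M
      have hq : 1 ≤ c / M := (Nat.one_le_div_iff (by omega)).2 h1
      have e : n + 3 * p = M * (c / M) + (c % M + (n + 3 * p - c)) := by omega
      have e1 : (n + 3 * p) / M = c / M := by
        rw [e, Nat.mul_add_div (by omega),
          Nat.div_eq_of_lt (a := c % M + (n + 3 * p - c)) (by omega), Nat.add_zero]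
      have e2 : (n + 3 * p) % M = c % M + (n + 3 * p - c) := by
        conv_lhs => rw [e]
        rw [Nat.mul_add_mod, Nat.mod_eq_of_lt (by omega)]
      have e3 : (n + 3 * p) / M ≤ (N + 3 * p) / M := Nat.div_le_div_right (by omega)
      simp only [Finset.coe_product, Set.mem_prod, Finset.mem_coe, Finset.mem_Icc, Finset.mem_range]
      omega
    · intro n _ m _ h
      simp only [Prod.mk.injEq] at h
      have h1 := Nat.div_add_mod (n + 3 * p) M
      have h2 := Nat.div_add_mod (m + 3 * p) M
      rw [h.1, h.2] at h1
      omega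
  have key : A.card * 2 ^ p ≤ N := by
    by_cases hN : N + 3 * p < M
    · rw [Nat.div_eq_of_lt hN] at hcard
      have : A.card = 0 := by omega
      simp [this]
    · have h1 : (N + 3 * p) / M * M ≤ N + 3 * p := Nat.div_mul_le_self _ _
      have h2 : (N + 3 * p) / M * (2 * (4 * p + 1) * 2 ^ p) ≤ (N + 3 * p) / M * M :=
        Nat.mul_le_mul_left _ hMp
      have h3 : A.card * 2 ^ p ≤ (N + 3 * p) / M * (4 * p + 1) * 2 ^ p := Nat.mul_le_mul_right _ hcard
      have h4 : (N + 3 * p) / M * (2 * (4 * p + 1) * 2 ^ p) =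
        2 * ((N + 3 * p) / M * (4 * p + 1) * 2 ^ p) := by ring
      omega
  have : (A.card : ℝ) * 2 ^ p ≤ N := by exact_mod_cast key
  rw [one_div, inv_pow, ← div_eq_mul_inv, le_div_iff₀ (by positivity)]
  exact this

lemma sum_tail (K N : ℕ) : ∑ p ∈ (Finset.range N).filter (fun p => K < p), ((1 : ℝ) / 2) ^ p
    ≤ (1 / 2) ^ K := by
  have : ∀ N, ∑ p ∈ (Finset.range N).filter (fun p => K < p), ((1 : ℝ) / 2) ^ p
    ≤ (1 / 2) ^ K - (if K < N then (1 / 2) ^ (N - 1) else 0) := by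
    intro N
    induction N with
    | zero => simp
    | succ n ih =>
      rw [Finset.range_add_one, Finset.filter_insert]
      by_cases h : K < n
      · rw [if_pos h, Finset.sum_insert (by simp)]
        rw [if_pos h] at ih
        rw [if_pos (by omega)]
        obtain ⟨m, rfl⟩ : ∃ m, n = m + 1 := ⟨n - 1, by omega⟩
        simp only [Nat.add_sub_cancel] at ih ⊢
        have : ((1 : ℝ) / 2) ^ (m + 1) = (1 / 2) ^ m / 2 := by rw [pow_succ]; ring
        linarith
      · rw [if_neg h]
        rw [if_neg h] at ih
        by_cases h' : K < n + 1
        · have hKn : K = n := by omega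
          rw [if_pos h']
          subst hKn
          have : (Finset.range K).filter (fun p => K < p) = ∅ := by
            ext q; simp; omega
          simp [this]
        · rw [if_neg h']; exact ih
  refine (this N).trans ?_
  split_ifs
  · have : (0 : ℝ) ≤ (1 / 2) ^ (N - 1) := by positivity
    linarith
  · simp

/-- The height relation. -/
def heightRel (c v : ℕ) : Prop :=
  (∃ p, 8 ^ (p + 1) ≤ c ∧ c % 8 ^ (p + 1) ≤ p ∧ v = 3 * p) ∨
  (∃ j, 8 ^ ((j + 1) ^ 2) ≤ c ∧ c < 4 * 8 ^ ((j + 1) ^ 2) ∧ v = 3 * j)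

lemma heightRel_le (c v : ℕ) (h : heightRel c v) : v ≤ c := by
  rcases h with ⟨p, h1, -, rfl⟩ | ⟨j, h1, -, rfl⟩
  · have h3 : p < 8 ^ p := Nat.lt_pow_self (by norm_num)
    rw [pow_succ] at h1
    omega
  · have := (T_facts j).1
    omega

lemma count_bad (a : ℕ → ℕ)
    (ha : ∀ n, 0 < a n → ∃ c v, n ≤ c ∧ heightRel c v ∧ a n + c ≤ v + n) (K j : ℕ) :
    ((((Finset.range (8 ^ ((j + 2) ^ 2) / 2)).filter (fun n => 3 * K < a n)).card : ℕ) : ℝ) ≤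
      4 * 8 ^ ((j + 1) ^ 2) + ((8 ^ ((j + 2) ^ 2) / 2 : ℕ) : ℝ) * (1 / 2) ^ K := by
  obtain ⟨N, hN⟩ : ∃ N, N = 8 ^ ((j + 2) ^ 2) / 2 := ⟨_, rfl⟩
  rw [← hN]
  let A : ℕ → Finset ℕ := fun p => (Finset.range N).filter (fun n =>
    ∃ c, 8 ^ (p + 1) ≤ c ∧ c % 8 ^ (p + 1) ≤ p ∧ n ≤ c ∧ c < n + 3 * p)
  have hsub : (Finset.range N).filter (fun n => 3 * K < a n) ⊆
      Finset.range (4 * 8 ^ ((j + 1) ^ 2)) ∪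
        ((Finset.range N).filter (fun p => K < p)).biUnion A := by
    intro n hn
    rw [Finset.mem_filter, Finset.mem_range] at hn
    obtain ⟨hnN, hK⟩ := hn
    obtain ⟨c, v, hc, hP, hav⟩ := ha n (by omega)
    rw [Finset.mem_union]
    rcases hP with ⟨p, h1, h2, rfl⟩ | ⟨i, h1, h2, rfl⟩
    · right
      rw [Finset.mem_biUnion]
      refine ⟨p, ?_, ?_⟩
      · rw [Finset.mem_filter, Finset.mem_range]
        have h3 : p < 8 ^ p := Nat.lt_pow_self (by norm_num)
        rw [pow_succ] at h1
        omega
      · simp only [A, Finset.mem_filter, Finset.mem_range]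
        exact ⟨hnN, c, h1, h2, hc, by omega⟩
    · left
      rw [Finset.mem_range]
      by_cases hij : i ≤ j
      · have : 8 ^ ((i + 1) ^ 2) ≤ 8 ^ ((j + 1) ^ 2) :=
          Nat.pow_le_pow_right (by norm_num) (Nat.pow_le_pow_left (by omega) 2)
        omega
      · exfalso
        have h3 : 8 ^ ((j + 2) ^ 2) ≤ 8 ^ ((i + 1) ^ 2) :=
          Nat.pow_le_pow_right (by norm_num) (Nat.pow_le_pow_left (by omega) 2)
        have := (T_facts i).1
        omega
  have h1 := (Finset.card_le_card hsub).trans (Finset.card_union_le _ _)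
  have h2 := h1.trans (Nat.add_le_add_left Finset.card_biUnion_le _)
  have h3 : ∀ p, ((A p).card : ℝ) ≤ N * (1 / 2) ^ p := by
    intro p
    apply count_single
    intro n hn
    simpa [A] using hn
  have h4 : (((Finset.range N).filter (fun n => 3 * K < a n)).card : ℝ) ≤
      4 * 8 ^ ((j + 1) ^ 2) +
        ∑ p ∈ (Finset.range N).filter (fun p => K < p), ((A p).card : ℝ) := by
    rw [Finset.card_range] at h2
    exact_mod_cast h2
  refine h4.trans ?_
  gcongr
  refine (Finset.sum_le_sum (fun p _ => h3 p)).trans ?_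
  rw [← Finset.mul_sum]
  exact mul_le_mul_of_nonneg_left (sum_tail K N) (by positivity)

/-- A set eventually contained in every `{a > 3K}` has zero lower density. -/
lemma lowerDensity_nonpos (a : ℕ → ℕ)
    (ha : ∀ n, 0 < a n → ∃ c v, n ≤ c ∧ heightRel c v ∧ a n + c ≤ v + n) (E : Set ℕ)
    (hE : ∀ K, ∃ n0, ∀ n ∈ E, n0 ≤ n → 3 * K < a n) : ¬ 0 < lowerDensity E := by
  intro h
  obtain ⟨δ, hδ0, hδ⟩ := exists_between h
  have hev := Filter.eventually_lt_of_lt_liminf hδ (isBoundedUnder_of ⟨0, fun N => by positivity⟩)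
  obtain ⟨K, hK⟩ := exists_pow_lt_of_lt_one (show (0 : ℝ) < δ / 3 by positivity)
    (by norm_num : (1 / 2 : ℝ) < 1)
  obtain ⟨n0, hn0⟩ := hE K
  obtain ⟨N0, hN0⟩ := eventually_atTop.1 hev
  obtain ⟨j1, hj1⟩ := exists_nat_gt (3 / δ)
  obtain ⟨j, hjdef⟩ : ∃ j, j = j1 + n0 + N0 := ⟨_, rfl⟩
  have hT0 := (T_facts j).1
  have hT1 := (T_facts (j + 1)).2 j (by omega)
  rw [show j + 1 + 1 = j + 2 by ring] at hT1
  have hcount := count_bad a ha K j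
  obtain ⟨S, hS⟩ : ∃ S, S = 8 ^ ((j + 1) ^ 2) := ⟨_, rfl⟩
  obtain ⟨N, hN⟩ : ∃ N, N = 8 ^ ((j + 2) ^ 2) / 2 := ⟨_, rfl⟩
  have hj8 : j < 8 ^ j := Nat.lt_pow_self (by norm_num)
  have hTS : 32 * (j + 1) * S ≤ N := by
    have : 64 * (j + 1) * S ≤ 8 ^ ((j + 2) ^ 2) := by
      refine le_trans ?_ hT1
      rw [hS]
      exact Nat.mul_le_mul_right _ (by omega)
    rw [hN, Nat.le_div_iff_mul_le (by norm_num)]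
    nlinarith
  rw [← hN] at hcount
  have hcS : ((8 : ℝ) ^ ((j + 1) ^ 2)) = (S : ℝ) := by rw [hS]; push_cast; rfl
  rw [hcS] at hcount
  rw [← hS] at hT0
  have hjN : j + 1 ≤ N := by nlinarith
  have hlt := hN0 (N - 1) (by omega)
  rw [show N - 1 + 1 = N by omega, show ((N - 1 : ℕ) : ℝ) + 1 = N by
    rw [Nat.cast_sub (by omega)]; simp] at hlt
  have hNpos : (0 : ℝ) < N := by exact_mod_cast (by omega : 0 < N)
  rw [lt_div_iff₀ hNpos] at hlt
  have hsub : (Finset.range N).filter (fun n => n ∈ E) ⊆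
      Finset.range n0 ∪ (Finset.range N).filter (fun n => 3 * K < a n) := by
    intro n hn
    rw [Finset.mem_filter] at hn
    rw [Finset.mem_union, Finset.mem_filter, Finset.mem_range]
    by_cases hh : n < n0
    · exact Or.inl hh
    · exact Or.inr ⟨hn.1, hn0 n hn.2 (by omega)⟩
  have hc := (Finset.card_le_card hsub).trans (Finset.card_union_le _ _)
  rw [Finset.card_range] at hc
  have hc' : (((Finset.range N).filter (fun n => n ∈ E)).card : ℝ) ≤
      n0 + (((Finset.range N).filter (fun n => 3 * K < a n)).card : ℝ) := by exact_mod_cast hc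
  have hn0S : (n0 : ℝ) ≤ S := by exact_mod_cast (by omega : n0 ≤ S)
  have hTS' : (32 : ℝ) * (j + 1) * S ≤ N := by exact_mod_cast hTS
  have hj1' : 3 / δ < j + 1 := by
    have : (j1 : ℝ) ≤ j := by exact_mod_cast (by omega : j1 ≤ j)
    linarith
  rw [div_lt_iff₀ hδ0] at hj1'
  have hS0 : (0 : ℝ) ≤ S := by positivity
  have e1 : (N : ℝ) * (1 / 2) ^ K ≤ N * (δ / 3) := by gcongr
  have e2 : 5 * (S : ℝ) ≤ δ * N / 3 := by
    have : δ * (32 * (j + 1) * S) ≤ δ * N := by gcongr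
    nlinarith
  nlinarith

lemma upperDensity_pos (p : ℕ) (E : Set ℕ)
    (hE : ∀ j, p ≤ j → (Nat.unpair j).1 = p → ∀ n, 2 * 8 ^ ((j + 1) ^ 2) ≤ n →
      n < 4 * 8 ^ ((j + 1) ^ 2) → 8 ^ (p + 1) ∣ n → n ∈ E) : 0 < upperDensity E := by
  have hpos : (0 : ℝ) < 1 / (2 * 8 ^ (p + 1)) := by positivity
  refine lt_of_lt_of_le hpos ?_
  apply Filter.le_limsup_of_frequently_le
  · rw [Filter.frequently_atTop]
    intro N0
    obtain ⟨j, hj⟩ : ∃ j, j = Nat.pair p N0 := ⟨_, rfl⟩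
    have hjp : (Nat.unpair j).1 = p := by simp [hj]
    have hpj : p ≤ j := hj ▸ Nat.left_le_pair _ _
    have hNj : N0 ≤ j := hj ▸ Nat.right_le_pair _ _
    have hT := (T_facts j).1
    obtain ⟨D, hD⟩ : 8 ^ (p + 1) ∣ 8 ^ ((j + 1) ^ 2) := pow_dvd_pow _ (by nlinarith)
    have hE' := hE j hpj hjp
    obtain ⟨S, hS⟩ : ∃ S, S = 8 ^ ((j + 1) ^ 2) := ⟨_, rfl⟩
    obtain ⟨M, hM⟩ : ∃ M, M = 8 ^ (p + 1) := ⟨_, rfl⟩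
    have hM0 : 0 < M := by rw [hM]; positivity
    rw [← hS] at hE' hT hD
    rw [← hM] at hE' hD
    refine ⟨4 * S - 1, by omega, ?_⟩
    rw [show 4 * S - 1 + 1 = 4 * S by omega, show ((4 * S - 1 : ℕ) : ℝ) + 1 = 4 * S by
      rw [Nat.cast_sub (by omega)]; push_cast; ring]
    have hcard : 2 * D ≤ ((Finset.range (4 * S)).filter (fun n => n ∈ E)).card := by
      have := Finset.card_le_card_of_injOn (s := Finset.range (2 * D))
        (t := (Finset.range (4 * S)).filter (fun n => n ∈ E)) (fun k => M * (2 * D + k)) ?_ ?_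
      · simpa using this
      · intro k hk
        have hk' : k < 2 * D := by simpa using hk
        have h1 : 2 * S ≤ M * (2 * D + k) := by rw [hD]; nlinarith
        have h2 : M * (2 * D + k) < 4 * S := by rw [hD]; nlinarith
        simp only [Finset.coe_filter, Set.mem_ofPred_eq, Finset.mem_range]
        exact ⟨h2, hE' _ h1 h2 (Dvd.intro _ rfl)⟩
      · intro k _ l _ h
        have := Nat.eq_of_mul_eq_mul_left hM0 h
        omega
    have hcard' : 2 * (D : ℝ) ≤ (((Finset.range (4 * S)).filter (fun n => n ∈ E)).card : ℝ) := by
      exact_mod_cast hcard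
    have hS0 : (0 : ℝ) < S := by exact_mod_cast (by omega : 0 < S)
    have hMr : ((8 : ℝ) ^ (p + 1)) = M := by rw [hM]; push_cast; rfl
    have hM0' : (0 : ℝ) < M := by exact_mod_cast hM0
    have hDr : (S : ℝ) = M * D := by exact_mod_cast hD
    rw [hMr, div_le_div_iff₀ (by positivity) (by positivity)]
    rw [hDr]
    nlinarith
  · refine isBoundedUnder_of ⟨1, fun N => ?_⟩
    rw [div_le_one (by positivity)]
    have := Finset.card_filter_le (Finset.range (N + 1)) (fun n => n ∈ E)
    rw [Finset.card_range] at this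
    exact_mod_cast this

/-- The zones `[2T_j, 4T_j)` are ordered. -/
lemma zone_lt {i j : ℕ} (h : i < j) : 4 * 8 ^ ((i + 1) ^ 2) ≤ 8 ^ ((j + 1) ^ 2) := by
  have h1 := (T_facts j).2 i h
  have h2 : 1 ≤ 8 ^ i := Nat.one_le_pow _ _ (by norm_num)
  exact (Nat.mul_le_mul_right _ (by omega)).trans h1

/-- The weighted shift with products `2 ^ a n`. -/
lemma exists_shift (𝕜 : Type*) [RCLike 𝕜] (a : ℕ → ℕ) (h1 : ∀ n, a (n + 1) ≤ a n + 1) :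
    ∃ (w : ℕ → 𝕜) (Bw : C₀(ℕ, 𝕜) →L[𝕜] C₀(ℕ, 𝕜)),
      (∀ n, w n ≠ 0) ∧ (∃ C : ℝ, ∀ n, ‖w n‖ ≤ C) ∧
      (∀ (x : C₀(ℕ, 𝕜)) (n : ℕ), Bw x n = w (n + 1) * x (n + 1)) ∧
      (∀ (n : ℕ) (x : C₀(ℕ, 𝕜)) (k : ℕ),
        ((⇑Bw)^[n] x) k = 2 ^ a (n + k) / 2 ^ a k * x (n + k)) := by
  let w : ℕ → 𝕜 := fun n => 2 ^ a n / 2 ^ a (n - 1)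
  have hw : ∀ n, ‖w n‖ ≤ 2 := by
    intro n
    have : a n ≤ a (n - 1) + 1 := by
      rcases n with _ | n
      · simp
      · exact h1 n
    simp only [w, norm_div, norm_pow, RCLike.norm_ofNat]
    rw [div_le_iff₀ (by positivity), ← pow_succ']
    exact pow_le_pow_right₀ (by norm_num) this
  have ht : ∀ x : C₀(ℕ, 𝕜), Tendsto (fun n => w (n + 1) * x (n + 1)) atTop (𝓝 0) := by
    intro x
    have hx := ((tendsto_add_atTop_iff_nat 1).2 (c0_tendsto x)).norm.const_mul 2
    simp only [norm_zero, mul_zero] at hx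
    refine squeeze_zero_norm (fun n => ?_) hx
    rw [norm_mul]
    exact mul_le_mul_of_nonneg_right (hw _) (norm_nonneg _)
  let B0 : C₀(ℕ, 𝕜) →ₗ[𝕜] C₀(ℕ, 𝕜) :=
    { toFun := fun x => c0mk _ (ht x)
      map_add' := by intro x y; ext n; simp [mul_add]
      map_smul' := by intro c x; ext n; simp; ring }
  let Bw : C₀(ℕ, 𝕜) →L[𝕜] C₀(ℕ, 𝕜) := B0.mkContinuous 2 (by
    intro x
    refine c0_norm_le _ _ (by positivity) (fun n => ?_)
    change ‖w (n + 1) * x (n + 1)‖ ≤ _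
    rw [norm_mul]
    exact mul_le_mul (hw _) (c0_apply_le x _) (norm_nonneg _) (by norm_num))
  have hB : ∀ (x : C₀(ℕ, 𝕜)) (n : ℕ), Bw x n = w (n + 1) * x (n + 1) := fun x n => rfl
  refine ⟨w, Bw, ?_, ⟨2, hw⟩, hB, ?_⟩
  · intro n
    simp [w]
  · intro n
    induction n with
    | zero => intro x k; simp
    | succ n ih =>
      intro x k
      rw [Function.iterate_succ_apply, ih, hB]
      simp only [w, Nat.add_sub_cancel]
      rw [show n + 1 + k = n + k + 1 by ring]
      have : (2 : 𝕜) ^ a (n + k) ≠ 0 := by simp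
      have : (2 : 𝕜) ^ a k ≠ 0 := by simp
      field_simp

lemma term_bound {𝕜 : Type*} [RCLike 𝕜] (y : ℕ → C₀(ℕ, 𝕜)) (hy1 : ∀ p k, p < k → y p k = 0)
    (hy2 : ∀ p, ‖y p‖ ≤ 2 ^ p) (a : ℕ → ℕ) (ha : ∀ n, a n ≤ n) (q r s i : ℕ) (hqi : q ≤ i)
    (hs : r ≤ q → 3 * i ≤ a s) :
    ‖(2 : 𝕜) ^ a r / 2 ^ a s * y q r‖ ≤ (1 / 2) ^ i := by
  by_cases hr : r ≤ q
  · have hs := hs hr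
    rw [norm_mul, norm_div, norm_pow, norm_pow, RCLike.norm_ofNat, div_mul_eq_mul_div,
      div_le_iff₀ (by positivity)]
    have e1 : (2 : ℝ) ^ a r * ‖y q r‖ ≤ 2 ^ i * 2 ^ i := by
      refine mul_le_mul (pow_le_pow_right₀ (by norm_num) ((ha r).trans (by omega))) ?_
        (norm_nonneg _) (by positivity)
      exact ((c0_apply_le _ _).trans (hy2 q)).trans (pow_le_pow_right₀ (by norm_num) hqi)
    refine e1.trans ?_
    have e2 : (2 : ℝ) ^ (3 * i) ≤ 2 ^ a s := pow_le_pow_right₀ (by norm_num) hs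
    calc (2 : ℝ) ^ i * 2 ^ i = (1 / 2) ^ i * 2 ^ (3 * i) := by
          rw [pow_mul, ← mul_pow, ← mul_pow]; norm_num
      _ ≤ _ := by gcongr
  · rw [hy1 q r (by omega)]
    simp

lemma exists_vector {𝕜 : Type*} [RCLike 𝕜] (y : ℕ → C₀(ℕ, 𝕜)) (hy1 : ∀ p k, p < k → y p k = 0)
    (hy2 : ∀ p, ‖y p‖ ≤ 2 ^ p) (a : ℕ → ℕ) (ha : ∀ n, a n ≤ n)
    (haP : ∀ n v, heightRel n v → v ≤ a n) :
    ∃ x : C₀(ℕ, 𝕜),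
      (∀ j k, 2 * 8 ^ ((j + 1) ^ 2) ≤ k → k < 4 * 8 ^ ((j + 1) ^ 2) →
        x k = 2 ^ a (k % 8 ^ ((Nat.unpair j).1 + 1)) / 2 ^ a k *
          y (Nat.unpair j).1 (k % 8 ^ ((Nat.unpair j).1 + 1))) ∧
      (∀ k, (¬ ∃ j, 2 * 8 ^ ((j + 1) ^ 2) ≤ k ∧ k < 4 * 8 ^ ((j + 1) ^ 2)) → x k = 0) := by
  let G : ℕ → ℕ → 𝕜 := fun j k => 2 ^ a (k % 8 ^ ((Nat.unpair j).1 + 1)) / 2 ^ a k *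
          y (Nat.unpair j).1 (k % 8 ^ ((Nat.unpair j).1 + 1))
  let f : ℕ → 𝕜 := fun k =>
    if h : ∃ j, 2 * 8 ^ ((j + 1) ^ 2) ≤ k ∧ k < 4 * 8 ^ ((j + 1) ^ 2) then G h.choose k else 0
  have hf1 : ∀ j k, 2 * 8 ^ ((j + 1) ^ 2) ≤ k → k < 4 * 8 ^ ((j + 1) ^ 2) → f k = G j k := by
    intro j k h1 h2
    have h : ∃ j, 2 * 8 ^ ((j + 1) ^ 2) ≤ k ∧ k < 4 * 8 ^ ((j + 1) ^ 2) := ⟨j, h1, h2⟩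
    have hc := h.choose_spec
    have : h.choose = j := by
      rcases lt_trichotomy h.choose j with hl | hl | hl
      · have := zone_lt hl; omega
      · exact hl
      · have := zone_lt hl; omega
    simp only [f, dif_pos h, this]
  have hf0 : ∀ k, (¬ ∃ j, 2 * 8 ^ ((j + 1) ^ 2) ≤ k ∧ k < 4 * 8 ^ ((j + 1) ^ 2)) → f k = 0 := by
    intro k h
    simp only [f, dif_neg h]
  have ht : Tendsto f atTop (𝓝 0) := by
    rw [Metric.tendsto_atTop]
    intro ε hε
    obtain ⟨J, hJ⟩ := exists_pow_lt_of_lt_one hε (by norm_num : (1 / 2 : ℝ) < 1)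
    refine ⟨4 * 8 ^ ((J + 1) ^ 2), fun k hk => ?_⟩
    rw [dist_zero_right]
    by_cases h : ∃ j, 2 * 8 ^ ((j + 1) ^ 2) ≤ k ∧ k < 4 * 8 ^ ((j + 1) ^ 2)
    · obtain ⟨j, h1, h2⟩ := h
      rw [hf1 j k h1 h2]
      have hJj : J ≤ j := by
        by_contra hlt
        have := zone_lt (not_le.1 hlt)
        omega
      have hb := term_bound y hy1 hy2 a ha (Nat.unpair j).1 (k % 8 ^ ((Nat.unpair j).1 + 1)) k j
        (Nat.unpair_left_le j) (fun _ => haP _ _ (Or.inr ⟨j, by omega, h2, rfl⟩))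
      refine lt_of_le_of_lt (hb.trans ?_) hJ
      exact pow_le_pow_of_le_one (by norm_num) (by norm_num) hJj
    · rw [hf0 k h, norm_zero]; exact hε
  exact ⟨c0mk f ht, hf1, hf0⟩

lemma orbit_close {𝕜 : Type*} [RCLike 𝕜] (y : ℕ → C₀(ℕ, 𝕜)) (hy1 : ∀ p k, p < k → y p k = 0)
    (hy2 : ∀ p, ‖y p‖ ≤ 2 ^ p) (a : ℕ → ℕ) (ha : ∀ n, a n ≤ n)
    (haP : ∀ n v, heightRel n v → v ≤ a n) (x : C₀(ℕ, 𝕜))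
    (hx1 : ∀ j k, 2 * 8 ^ ((j + 1) ^ 2) ≤ k → k < 4 * 8 ^ ((j + 1) ^ 2) →
        x k = 2 ^ a (k % 8 ^ ((Nat.unpair j).1 + 1)) / 2 ^ a k *
          y (Nat.unpair j).1 (k % 8 ^ ((Nat.unpair j).1 + 1)))
    (hx0 : ∀ k, (¬ ∃ j, 2 * 8 ^ ((j + 1) ^ 2) ≤ k ∧ k < 4 * 8 ^ ((j + 1) ^ 2)) → x k = 0)
    (p j : ℕ) (hpj : p ≤ j) (hj : (Nat.unpair j).1 = p) (n : ℕ) (hn1 : 2 * 8 ^ ((j + 1) ^ 2) ≤ n)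
    (hn2 : n < 4 * 8 ^ ((j + 1) ^ 2)) (hn3 : 8 ^ (p + 1) ∣ n) (s : ℕ) :
    ‖2 ^ a (n + s) / 2 ^ a s * x (n + s) - y p s‖ ≤ (1 / 2) ^ p := by
  have hpM : p < 8 ^ (p + 1) := (Nat.lt_succ_self p).trans (Nat.lt_pow_self (by norm_num))
  have hne : ∀ m, (2 : 𝕜) ^ a m ≠ 0 := fun m => by simp
  have hsimp : ∀ r (z : 𝕜), 2 ^ a (n + s) / 2 ^ a s * (2 ^ a r / 2 ^ a (n + s) * z) =
      2 ^ a r / 2 ^ a s * z := by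
    intro r z
    have := hne (n + s)
    have := hne s
    field_simp
  by_cases h : ∃ i, 2 * 8 ^ ((i + 1) ^ 2) ≤ n + s ∧ n + s < 4 * 8 ^ ((i + 1) ^ 2)
  · obtain ⟨i, h1, h2⟩ := h
    rw [hx1 i _ h1 h2, hsimp]
    rcases lt_trichotomy i j with hl | rfl | hl
    · have := zone_lt hl; omega
    · rw [hj]
      have hmod : (n + s) % 8 ^ (p + 1) = s % 8 ^ (p + 1) := by
        obtain ⟨d, rfl⟩ := hn3
        rw [Nat.mul_add_mod]
      rw [hmod]
      by_cases hs : s < 8 ^ (p + 1)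
      · rw [Nat.mod_eq_of_lt hs, div_self (hne s)]
        simp
      · rw [hy1 p s (by omega), sub_zero]
        exact term_bound y hy1 hy2 a ha p _ s p le_rfl
          (fun hr => haP _ _ (Or.inl ⟨p, by omega, hr, rfl⟩))
    · have hz := zone_lt hl
      have hT := (T_facts i).1
      rw [hy1 p s (by omega), sub_zero]
      refine (term_bound y hy1 hy2 a ha _ _ s i (Nat.unpair_left_le i)
          (fun _ => haP _ _ (Or.inr ⟨i, by omega, by omega, rfl⟩))).trans ?_
      exact pow_le_pow_of_le_one (by norm_num) (by norm_num) (by omega)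
  · have hs : p < s := by
      by_contra hs
      apply h
      refine ⟨j, by omega, ?_⟩
      obtain ⟨D, hD⟩ : 8 ^ (p + 1) ∣ 4 * 8 ^ ((j + 1) ^ 2) :=
        Dvd.dvd.mul_left (pow_dvd_pow _ (by nlinarith)) _
      obtain ⟨d, rfl⟩ := hn3
      rw [hD] at hn2 ⊢
      have hdD : d < D := lt_of_mul_lt_mul_left hn2 (Nat.zero_le _)
      have : 8 ^ (p + 1) * (d + 1) ≤ 8 ^ (p + 1) * D := Nat.mul_le_mul_left _ hdD
      rw [mul_add] at this
      omega
    rw [hx0 _ h, hy1 p s hs]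
    simp

/-- There exists a bounded sequence `w` of nonzero scalars such that the weighted backward
shift `B_w` on `c₀` (the continuous linear operator `Bw` with `(Bw x) n = w (n+1) * x (n+1)`)
is upper frequently hypercyclic but not frequently hypercyclic. -/
theorem exists_weightedShift_upperFrequentlyHC_not_frequentlyHC {𝕜 : Type*} [RCLike 𝕜] :
    ∃ (w : ℕ → 𝕜) (Bw : C₀(ℕ, 𝕜) →L[𝕜] C₀(ℕ, 𝕜)),
      (∀ n, w n ≠ 0) ∧ (∃ C : ℝ, ∀ n, ‖w n‖ ≤ C) ∧
      (∀ (x : C₀(ℕ, 𝕜)) (n : ℕ), Bw x n = w (n + 1) * x (n + 1)) ∧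
      (∃ x : C₀(ℕ, 𝕜), ∀ U : Set C₀(ℕ, 𝕜), IsOpen U → U.Nonempty →
        0 < upperDensity {n : ℕ | (⇑Bw)^[n] x ∈ U}) ∧
      ¬ (∃ x : C₀(ℕ, 𝕜), ∀ U : Set C₀(ℕ, 𝕜), IsOpen U → U.Nonempty →
        0 < lowerDensity {n : ℕ | (⇑Bw)^[n] x ∈ U}) := by
  obtain ⟨a, ha0, ha1, haP, haE⟩ := exists_envelope heightRel heightRel_le
  have ha : ∀ n, a n ≤ n := by
    intro n
    induction n with
    | zero => omega
    | succ n ih => have := ha1 n; omega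
  obtain ⟨w, Bw, hw0, hwb, hB, hit⟩ := exists_shift 𝕜 a ha1
  refine ⟨w, Bw, hw0, hwb, hB, ?_, ?_⟩
  · obtain ⟨y, hy1, hy2, hyU⟩ := exists_targets 𝕜
    obtain ⟨x, hx1, hx0⟩ := exists_vector y hy1 hy2 a ha haP
    refine ⟨x, fun U hU hne => ?_⟩
    obtain ⟨p, hp⟩ := hyU U hU hne
    apply upperDensity_pos p
    intro j hpj hj n h1 h2 h3
    apply hp
    refine c0_norm_le _ _ (by positivity) (fun s => ?_)
    rw [ZeroAtInftyContinuousMap.sub_apply, hit]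
    exact orbit_close y hy1 hy2 a ha haP x hx1 hx0 p j hpj hj n h1 h2 h3 s
  · rintro ⟨x, hx⟩
    have hcont : Continuous (fun z : C₀(ℕ, 𝕜) => ‖z 0‖) := by
      have : LipschitzWith 1 (fun z : C₀(ℕ, 𝕜) => z 0) := by
        refine LipschitzWith.of_dist_le_mul (fun u v => ?_)
        rw [dist_eq_norm, dist_eq_norm, ← ZeroAtInftyContinuousMap.sub_apply]
        simpa using c0_apply_le (u - v) 0
      exact this.continuous.norm
    have hd := hx {z | 1 < ‖z 0‖} (isOpen_lt continuous_const hcont) (by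
      refine ⟨c0mk (fun n => if n = 0 then 2 else 0) ?_, ?_⟩
      · apply tendsto_const_nhds.congr'
        filter_upwards [eventually_gt_atTop 0] with n hn
        rw [if_neg (by omega)]
      · simp)
    refine lowerDensity_nonpos a haE _ (fun K => ?_) hd
    obtain ⟨n0, hn0⟩ := Metric.tendsto_atTop.1 (c0_tendsto x) ((1 / 2) ^ (3 * K)) (by positivity)
    refine ⟨n0, fun n hn hle => ?_⟩
    have h1 := hn0 n hle
    rw [dist_zero_right] at h1
    have h2 : 1 < ‖((⇑Bw)^[n] x) 0‖ := hn
    rw [hit, ha0, pow_zero, div_one, add_zero, norm_mul, norm_pow, RCLike.norm_ofNat] at h2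
    by_contra hcon
    have h3 : (2 : ℝ) ^ a n ≤ 2 ^ (3 * K) := pow_le_pow_right₀ (by norm_num) (not_lt.1 hcon)
    have h4 : (2 : ℝ) ^ a n * ‖x n‖ ≤ 2 ^ (3 * K) * (1 / 2) ^ (3 * K) :=
      mul_le_mul h3 h1.le (norm_nonneg _) (by positivity)
    rw [← mul_pow] at h4
    norm_num at h4
    linarith
end
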